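/- arXiv:1805.02886 — 3 statements merged into one kernel-verified Lean document; each statement's English description precedes it below -/
import Mathlib

section
/- For every integer k ≥ 1, the wheel W_{4k} on 4k+1 vertices has local antimagic chromatic number exactly 3. -/
open scoped BigOperators

/-- The induced vertex sum: sum of labels of edges incident to `v`. -/
noncomputable def vertexSum {V : Type*} (G : SimpleGraph V) (f : Sym2 V → ℕ) (v : V) : ℕ :=
  ∑ᶠ e ∈ G.incidenceSet v, f e

/-- `f` is a local antimagic labeling of `G`: a bijection from the edge set onto
`{1, …, |E(G)|}` such that adjacent vertices get distinct induced sums. -/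
def IsLocalAntimagic {V : Type*} (G : SimpleGraph V) (f : Sym2 V → ℕ) : Prop :=
  Set.BijOn f G.edgeSet (Set.Icc 1 G.edgeSet.ncard) ∧
  ∀ u v, G.Adj u v → vertexSum G f u ≠ vertexSum G f v

/-- Number of distinct induced vertex labels of the labeling `f`. -/
noncomputable def colorCount {V : Type*} (G : SimpleGraph V) (f : Sym2 V → ℕ) : ℕ :=
  (Set.range (vertexSum G f)).ncard

/-- The local antimagic chromatic number. -/
noncomputable def chiLA {V : Type*} (G : SimpleGraph V) : ℕ :=
  sInf { n | ∃ f, IsLocalAntimagic G f ∧ colorCount G f = n }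

/-- The join `G ∨ Oₙ` of `G` with the empty graph on `n` vertices. -/
def joinEmpty {V : Type*} (G : SimpleGraph V) (n : ℕ) : SimpleGraph (V ⊕ Fin n) :=
  SimpleGraph.fromRel (fun x y =>
    (∃ a b, x = Sum.inl a ∧ y = Sum.inl b ∧ G.Adj a b) ∨ (x.isLeft ∧ y.isRight))

/-- The wheel `Wₙ`: hub `none` joined to an `n`-cycle on `some`-vertices. -/
def wheel (n : ℕ) : SimpleGraph (Option (Fin n)) :=
  SimpleGraph.fromRel (fun x y =>
    x = none ∨ ∃ a b : Fin n, x = some a ∧ y = some b ∧ (b : ℕ) = ((a : ℕ) + 1) % n)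


/-! ### Parametrising the edges of the wheel -/

/-- Successor of a rim index. -/
def rimNext {n : ℕ} (i : Fin n) : Fin n :=
  ⟨((i : ℕ) + 1) % n, Nat.mod_lt _ (lt_of_le_of_lt (Nat.zero_le _) i.2)⟩

/-- Predecessor of a rim index. -/
def rimPrev {n : ℕ} (i : Fin n) : Fin n :=
  ⟨((i : ℕ) + n - 1) % n, Nat.mod_lt _ (lt_of_le_of_lt (Nat.zero_le _) i.2)⟩

/-- Edges of the wheel: `inl i` is the spoke at `i`, `inr i` the rim edge from `i` to `i+1`. -/
def wheelEdge (n : ℕ) : Fin n ⊕ Fin n → Sym2 (Option (Fin n))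
  | Sum.inl i => s(none, some i)
  | Sum.inr i => s(some i, some (rimNext i))

lemma mod_succ_cases {n a : ℕ} (h : a < n) :
    ((a + 1) % n = a + 1 ∧ a + 1 < n) ∨ ((a + 1) % n = 0 ∧ a + 1 = n) := by
  rcases Nat.lt_or_ge (a + 1) n with h1 | h1
  · left; exact ⟨Nat.mod_eq_of_lt h1, h1⟩
  · right
    have : a + 1 = n := by omega
    exact ⟨by rw [this, Nat.mod_self], this⟩

lemma mod_pred_cases {n a : ℕ} (h : a < n) :
    ((a + n - 1) % n = a - 1 ∧ 0 < a) ∨ ((a + n - 1) % n = n - 1 ∧ a = 0) := by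
  rcases Nat.eq_zero_or_pos a with h1 | h1
  · right
    subst h1
    exact ⟨by rw [Nat.zero_add]; exact Nat.mod_eq_of_lt (by omega), rfl⟩
  · left
    have : a + n - 1 = (a - 1) + n := by omega
    exact ⟨by rw [this, Nat.add_mod_right]; exact Nat.mod_eq_of_lt (by omega), h1⟩

lemma rimNext_val {n : ℕ} (i : Fin n) : ((rimNext i : Fin n) : ℕ) = ((i : ℕ) + 1) % n := rfl
lemma rimPrev_val {n : ℕ} (i : Fin n) : ((rimPrev i : Fin n) : ℕ) = ((i : ℕ) + n - 1) % n := rfl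

lemma rimNext_eq_iff {n : ℕ} (i j : Fin n) : rimNext i = j ↔ i = rimPrev j := by
  rw [Fin.ext_iff, Fin.ext_iff, rimNext_val, rimPrev_val]
  have h1 := mod_succ_cases i.2
  have h2 := mod_pred_cases j.2
  have := i.2
  have := j.2
  omega

lemma rimNext_ne {n : ℕ} (hn : 3 ≤ n) (i : Fin n) : rimNext i ≠ i := by
  rw [Ne, Fin.ext_iff, rimNext_val]
  have h1 := mod_succ_cases i.2
  omega

lemma rimPrev_ne {n : ℕ} (hn : 3 ≤ n) (i : Fin n) : rimPrev i ≠ i := by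
  rw [Ne, Fin.ext_iff, rimPrev_val]
  have h1 := mod_pred_cases i.2
  omega

lemma rimNext_next_ne {n : ℕ} (hn : 3 ≤ n) (i : Fin n) : rimNext (rimNext i) ≠ i := by
  rw [Ne, Fin.ext_iff, rimNext_val]
  have h2 := mod_succ_cases (rimNext i).2
  rw [rimNext_val] at h2 ⊢
  have h1 := mod_succ_cases i.2
  omega

lemma rimNext_inj {n : ℕ} {i j : Fin n} (h : rimNext i = rimNext j) : i = j := by
  rw [(rimNext_eq_iff i (rimNext j)).1 h]
  exact ((rimNext_eq_iff j (rimNext j)).1 rfl).symm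

lemma wheelEdge_injective {n : ℕ} (hn : 3 ≤ n) : Function.Injective (wheelEdge n) := by
  rintro (i | i) (j | j) h
  · simpa [wheelEdge] using h
  · simp [wheelEdge] at h
  · simp [wheelEdge] at h
  · simp only [wheelEdge, Sym2.eq_iff, Option.some.injEq] at h
    rcases h with ⟨h, _⟩ | ⟨h1, h2⟩
    · rw [h]
    · exfalso
      rw [h1] at h2
      exact rimNext_next_ne hn j h2

lemma wheel_adj_none {n : ℕ} (i : Fin n) : (wheel n).Adj none (some i) := by
  simp [wheel]

lemma wheel_adj_next {n : ℕ} (hn : 3 ≤ n) (i : Fin n) :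
    (wheel n).Adj (some i) (some (rimNext i)) := by
  rw [wheel, SimpleGraph.fromRel_adj]
  refine ⟨?_, Or.inl (Or.inr ⟨i, rimNext i, rfl, rfl, rfl⟩)⟩
  intro h
  exact rimNext_ne hn i (Option.some.inj h).symm

lemma wheel_adj_cases {n : ℕ} {u v : Option (Fin n)} (h : (wheel n).Adj u v) :
    (∃ i, (u = none ∧ v = some i) ∨ (v = none ∧ u = some i)) ∨
    (∃ i, (u = some i ∧ v = some (rimNext i)) ∨ (v = some i ∧ u = some (rimNext i))) := by
  rw [wheel, SimpleGraph.fromRel_adj] at h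
  obtain ⟨hne, (h | ⟨a, b, h1, h2, h3⟩) | (h | ⟨a, b, h1, h2, h3⟩)⟩ := h
  · left
    cases v with
    | none => exact absurd h hne
    | some i => exact ⟨i, Or.inl ⟨h, rfl⟩⟩
  · right
    refine ⟨a, Or.inl ⟨h1, ?_⟩⟩
    rw [h2]; congr 1; exact Fin.ext h3
  · left
    cases u with
    | none => exact absurd h.symm hne
    | some i => exact ⟨i, Or.inr ⟨h, rfl⟩⟩
  · right
    refine ⟨a, Or.inr ⟨h1, ?_⟩⟩
    rw [h2]; congr 1; exact Fin.ext h3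

lemma wheel_edgeSet {n : ℕ} (hn : 3 ≤ n) : (wheel n).edgeSet = Set.range (wheelEdge n) := by
  ext e
  induction e using Sym2.ind with
  | _ u v =>
    rw [SimpleGraph.mem_edgeSet]
    constructor
    · intro h
      rcases wheel_adj_cases h with ⟨i, ⟨rfl, rfl⟩ | ⟨rfl, rfl⟩⟩ | ⟨i, ⟨rfl, rfl⟩ | ⟨rfl, rfl⟩⟩
      · exact ⟨Sum.inl i, rfl⟩
      · exact ⟨Sum.inl i, Sym2.eq_swap⟩
      · exact ⟨Sum.inr i, rfl⟩
      · exact ⟨Sum.inr i, Sym2.eq_swap⟩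
    · rintro ⟨i | i, h⟩
      · rw [← SimpleGraph.mem_edgeSet, ← h]; exact wheel_adj_none i
      · rw [← SimpleGraph.mem_edgeSet, ← h]; exact wheel_adj_next hn i

lemma wheel_ncard {n : ℕ} (hn : 3 ≤ n) : (wheel n).edgeSet.ncard = 2 * n := by
  rw [wheel_edgeSet hn, ← Set.image_univ, Set.ncard_image_of_injective _ (wheelEdge_injective hn),
    Set.ncard_univ, Nat.card_eq_fintype_card]
  simp [two_mul]

lemma wheel_incidence_none {n : ℕ} (hn : 3 ≤ n) :
    (wheel n).incidenceSet none = Set.range (fun i => wheelEdge n (Sum.inl i)) := by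
  ext e
  rw [SimpleGraph.incidenceSet, wheel_edgeSet hn]
  constructor
  · rintro ⟨⟨i | i, rfl⟩, h⟩
    · exact ⟨i, rfl⟩
    · simp [wheelEdge] at h
  · rintro ⟨i, rfl⟩
    exact ⟨⟨_, rfl⟩, by simp [wheelEdge]⟩

lemma wheel_incidence_some {n : ℕ} (hn : 3 ≤ n) (i : Fin n) :
    (wheel n).incidenceSet (some i) =
      wheelEdge n '' {Sum.inl i, Sum.inr i, Sum.inr (rimPrev i)} := by
  ext e
  rw [SimpleGraph.incidenceSet, wheel_edgeSet hn]
  constructor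
  · rintro ⟨⟨j | j, rfl⟩, h⟩
    · refine ⟨_, ?_, rfl⟩
      simp [wheelEdge] at h
      simp [h]
    · refine ⟨_, ?_, rfl⟩
      simp only [wheelEdge, Sym2.mem_iff, Option.some.injEq] at h
      rcases h with h | h
      · simp [h]
      · rw [(rimNext_eq_iff j i).1 h.symm]; simp
  · rintro ⟨t, ht, rfl⟩
    refine ⟨⟨_, rfl⟩, ?_⟩
    simp only [Set.mem_insert_iff, Set.mem_singleton_iff] at ht
    rcases ht with rfl | rfl | rfl
    · simp [wheelEdge]
    · simp [wheelEdge]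
    · have := (rimNext_eq_iff (rimPrev i) i).2 rfl
      simp [wheelEdge, this]

/-- The labelling of the edges of the wheel from spoke labels `s` and rim labels `r`. -/
noncomputable def wheelLabel (n : ℕ) (s r : ℕ → ℕ) : Sym2 (Option (Fin n)) → ℕ :=
  Function.extend (wheelEdge n) (Sum.elim (fun i => s i) (fun i => r i)) 0

lemma wheelLabel_edge {n : ℕ} (hn : 3 ≤ n) (s r : ℕ → ℕ) (t : Fin n ⊕ Fin n) :
    wheelLabel n s r (wheelEdge n t) = Sum.elim (fun i : Fin n => s i) (fun i : Fin n => r i) t :=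
  (wheelEdge_injective hn).extend_apply _ _ _

lemma wheel_sum_some {n : ℕ} (hn : 3 ≤ n) (s r : ℕ → ℕ) (i : Fin n) :
    vertexSum (wheel n) (wheelLabel n s r) (some i) = s i + r i + r (((i : ℕ) + n - 1) % n) := by
  rw [vertexSum, wheel_incidence_some hn, finsum_mem_image (wheelEdge_injective hn).injOn]
  rw [finsum_mem_insert _ (by simp) (Set.toFinite _), finsum_mem_pair]
  · simp only [wheelLabel_edge hn, Sum.elim_inl, Sum.elim_inr, rimPrev_val]
    ring
  · intro h
    exact rimPrev_ne hn i (Sum.inr.inj h).symm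

lemma wheel_sum_none {n : ℕ} (hn : 3 ≤ n) (s r : ℕ → ℕ) :
    vertexSum (wheel n) (wheelLabel n s r) none = ∑ i ∈ Finset.range n, s i := by
  rw [vertexSum, wheel_incidence_none hn,
    finsum_mem_range (g := fun i => wheelEdge n (Sum.inl i))
      ((wheelEdge_injective hn).comp Sum.inl_injective),
    finsum_eq_sum_of_fintype, Finset.sum_range]
  simp only [wheelLabel_edge hn, Sum.elim_inl]

/-- Any local antimagic labeling of a wheel uses at least three colors. -/
lemma wheel_three_le {n : ℕ} (hn : 3 ≤ n) (f : Sym2 (Option (Fin n)) → ℕ)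
    (hf : IsLocalAntimagic (wheel n) f) : 3 ≤ colorCount (wheel n) f := by
  let i : Fin n := ⟨0, by omega⟩
  have h1 := hf.2 _ _ (wheel_adj_none i)
  have h2 := hf.2 _ _ (wheel_adj_none (rimNext i))
  have h3 := hf.2 _ _ (wheel_adj_next hn i)
  have hc : ({vertexSum (wheel n) f none, vertexSum (wheel n) f (some i),
      vertexSum (wheel n) f (some (rimNext i))} : Set ℕ).ncard = 3 :=
    Set.ncard_eq_three.2 ⟨_, _, _, h1, h2, h3, rfl⟩
  rw [colorCount, ← hc]
  apply Set.ncard_le_ncard _ (Set.finite_range _)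
  rintro z (rfl | rfl | rfl) <;> exact ⟨_, rfl⟩

/-- Sufficient condition for the wheel to have local antimagic chromatic number three. -/
lemma chiLA_wheel_of {n : ℕ} (hn : 3 ≤ n) (hpar : n % 2 = 0) (r s : ℕ → ℕ) (A B : ℕ)
    (hr : ∀ i < n, 1 ≤ r i ∧ r i ≤ 2 * n) (hs : ∀ i < n, 1 ≤ s i ∧ s i ≤ 2 * n)
    (hrr : ∀ i < n, ∀ j < n, r i = r j → i = j)
    (hss : ∀ i < n, ∀ j < n, s i = s j → i = j)
    (hrs : ∀ i < n, ∀ j < n, r i ≠ s j)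
    (hA : ∀ i < n, i % 2 = 1 → s i + r i + r ((i + n - 1) % n) = A)
    (hB : ∀ i < n, i % 2 = 0 → s i + r i + r ((i + n - 1) % n) = B)
    (hAB : A ≠ B)
    (hHA : ∑ i ∈ Finset.range n, s i ≠ A) (hHB : ∑ i ∈ Finset.range n, s i ≠ B) :
    chiLA (wheel n) = 3 := by
  have hsum : ∀ i : Fin n, vertexSum (wheel n) (wheelLabel n s r) (some i) =
      if (i : ℕ) % 2 = 1 then A else B := by
    intro i
    rw [wheel_sum_some hn]
    split_ifs with h
    · exact hA i i.2 h
    · exact hB i i.2 (by omega)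
  have hnone := wheel_sum_none hn s r
  have hmaps : Set.MapsTo (wheelLabel n s r) (wheel n).edgeSet
      (Set.Icc 1 (wheel n).edgeSet.ncard) := by
    rw [wheel_ncard hn, wheel_edgeSet hn]
    rintro _ ⟨i | i, rfl⟩
    · rw [wheelLabel_edge hn]; exact hs i i.2
    · rw [wheelLabel_edge hn]; exact hr i i.2
  have hinj : Set.InjOn (wheelLabel n s r) (wheel n).edgeSet := by
    rw [wheel_edgeSet hn]
    rintro _ ⟨i | i, rfl⟩ _ ⟨j | j, rfl⟩ h <;>
      simp only [wheelLabel_edge hn, Sum.elim_inl, Sum.elim_inr] at h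
    · rw [Fin.ext (hss i i.2 j j.2 h)]
    · exact absurd h.symm (hrs j j.2 i i.2)
    · exact absurd h (hrs i i.2 j j.2)
    · rw [Fin.ext (hrr i i.2 j j.2 h)]
  have hbij : Set.BijOn (wheelLabel n s r) (wheel n).edgeSet
      (Set.Icc 1 (wheel n).edgeSet.ncard) := by
    refine ⟨hmaps, hinj, ?_⟩
    have himg : wheelLabel n s r '' (wheel n).edgeSet = Set.Icc 1 (wheel n).edgeSet.ncard := by
      apply Set.eq_of_subset_of_ncard_le hmaps.image_subset _ (Set.finite_Icc _ _)
      rw [hinj.ncard_image, ← Finset.coe_Icc, Set.ncard_coe_finset, Nat.card_Icc]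
      omega
    exact himg.ge
  have hla : IsLocalAntimagic (wheel n) (wheelLabel n s r) := by
    refine ⟨hbij, ?_⟩
    intro u v h
    have hstep : ∀ i : Fin n, vertexSum (wheel n) (wheelLabel n s r) (some i) ≠
        vertexSum (wheel n) (wheelLabel n s r) (some (rimNext i)) := by
      intro i
      rw [hsum, hsum, rimNext_val]
      have h1 := mod_succ_cases i.2
      split_ifs with h2 h3 h3
      · omega
      · exact hAB
      · exact hAB.symm
      · omega
    have hhub : ∀ i : Fin n, vertexSum (wheel n) (wheelLabel n s r) none ≠
        vertexSum (wheel n) (wheelLabel n s r) (some i) := by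
      intro i
      rw [hsum, hnone]
      split_ifs
      · exact hHA
      · exact hHB
    rcases wheel_adj_cases h with ⟨i, ⟨rfl, rfl⟩ | ⟨rfl, rfl⟩⟩ | ⟨i, ⟨rfl, rfl⟩ | ⟨rfl, rfl⟩⟩
    · exact hhub i
    · exact (hhub i).symm
    · exact hstep i
    · exact (hstep i).symm
  have hcount : colorCount (wheel n) (wheelLabel n s r) ≤ 3 := by
    rw [colorCount]
    refine le_trans (Set.ncard_le_ncard (t := {∑ i ∈ Finset.range n, s i, A, B}) ?_
      (Set.toFinite _)) ?_
    · rintro _ ⟨_ | i, rfl⟩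
      · rw [hnone]; simp
      · rw [hsum]; split_ifs <;> simp
    · exact le_trans (Set.ncard_insert_le _ _) (Nat.succ_le_succ ((Set.ncard_insert_le _ _).trans
        (by rw [Set.ncard_singleton])))
  have hmem : (3 : ℕ) ∈ { m | ∃ f, IsLocalAntimagic (wheel n) f ∧ colorCount (wheel n) f = m } :=
    ⟨_, hla, le_antisymm hcount (wheel_three_le hn _ hla)⟩
  refine le_antisymm (Nat.sInf_le hmem) (le_csInf ⟨_, hmem⟩ ?_)
  rintro m ⟨f, hf, rfl⟩
  exact wheel_three_le hn f hf

/-- Reduction to four sequences of length `2k`: even/odd rim labels `x`, `y` and the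
labels `p`, `q` of the spokes at odd/even vertices. -/
lemma chiLA_wheel_of_seq {k : ℕ} (hk : 1 ≤ k) (x y p q : ℕ → ℕ)
    (hx : ∀ j < 2 * k, 1 ≤ x j ∧ x j ≤ 2 * k)
    (hy : ∀ j < 2 * k, 2 * k + 1 ≤ y j ∧ y j ≤ 4 * k)
    (hp : ∀ j < 2 * k, 4 * k + 1 ≤ p j ∧ p j ≤ 8 * k)
    (hq : ∀ j < 2 * k, 4 * k + 1 ≤ q j ∧ q j ≤ 8 * k)
    (hxx : ∀ i < 2 * k, ∀ j < 2 * k, x i = x j → i = j)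
    (hyy : ∀ i < 2 * k, ∀ j < 2 * k, y i = y j → i = j)
    (hpp : ∀ i < 2 * k, ∀ j < 2 * k, p i = p j → i = j)
    (hqq : ∀ i < 2 * k, ∀ j < 2 * k, q i = q j → i = j)
    (hpq : ∀ i < 2 * k, ∀ j < 2 * k, p i ≠ q j)
    (hA : ∀ j < 2 * k, p j + x j + y j = 9 * k + 2)
    (hB : ∀ j < 2 * k, j ≠ 0 → q j + x j + y (j - 1) = 11 * k + 1)
    (hB0 : q 0 + x 0 + y (2 * k - 1) = 11 * k + 1) (hk1 : 2 ≤ k) :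
    chiLA (wheel (4 * k)) = 3 := by
  have hsl : ∀ i < 4 * k, 4 * k + 1 ≤ (if i % 2 = 0 then q (i / 2) else p (i / 2)) := by
    intro i hi
    have := hp (i / 2) (by omega)
    have := hq (i / 2) (by omega)
    split_ifs <;> omega
  have hH : 11 * k + 1 < ∑ i ∈ Finset.range (4 * k),
      (if i % 2 = 0 then q (i / 2) else p (i / 2)) := by
    have h1 := Finset.card_nsmul_le_sum (Finset.range (4 * k))
      (fun i => if i % 2 = 0 then q (i / 2) else p (i / 2)) (4 * k + 1)
      (fun i hi => hsl i (Finset.mem_range.1 hi))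
    rw [Finset.card_range, smul_eq_mul] at h1
    nlinarith
  refine chiLA_wheel_of (n := 4 * k) (by omega) (by omega)
    (fun i => if i % 2 = 0 then x (i / 2) else y (i / 2))
    (fun i => if i % 2 = 0 then q (i / 2) else p (i / 2)) (9 * k + 2) (11 * k + 1)
    ?_ ?_ ?_ ?_ ?_ ?_ ?_ (by omega) (by omega) (by omega)
  · intro i hi
    have := hx (i / 2) (by omega)
    have := hy (i / 2) (by omega)
    split_ifs <;> omega
  · intro i hi
    have := hp (i / 2) (by omega)
    have := hq (i / 2) (by omega)
    split_ifs <;> omega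
  · intro i hi j hj
    have := hx (i / 2) (by omega)
    have := hy (i / 2) (by omega)
    have := hx (j / 2) (by omega)
    have := hy (j / 2) (by omega)
    have h1 := hxx (i / 2) (by omega) (j / 2) (by omega)
    have h2 := hyy (i / 2) (by omega) (j / 2) (by omega)
    split_ifs
    · intro h; have := h1 h; omega
    · omega
    · omega
    · intro h; have := h2 h; omega
  · intro i hi j hj
    have h1 := hqq (i / 2) (by omega) (j / 2) (by omega)
    have h2 := hpp (i / 2) (by omega) (j / 2) (by omega)
    have h3 := hpq (i / 2) (by omega) (j / 2) (by omega)
    have h4 := hpq (j / 2) (by omega) (i / 2) (by omega)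
    split_ifs
    · intro h; have := h1 h; omega
    · intro h; exact absurd h.symm h4
    · intro h; exact absurd h h3
    · intro h; have := h2 h; omega
  · intro i hi j hj
    have := hx (i / 2) (by omega)
    have := hy (i / 2) (by omega)
    have := hsl j hj
    split_ifs at this ⊢ <;> omega
  · intro i hi h
    have h1 := hA (i / 2) (by omega)
    have h2 := mod_pred_cases hi
    have h3 : (i + 4 * k - 1) % (4 * k) = i - 1 := by omega
    rw [h3, if_neg (by omega), if_neg (by omega), if_pos (by omega),
      show (i - 1) / 2 = i / 2 by omega]
    omega
  · intro i hi h
    have h2 := mod_pred_cases hi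
    rcases h2 with ⟨h3, h4⟩ | ⟨h3, rfl⟩
    · have h1 := hB (i / 2) (by omega) (by omega)
      rw [h3, if_pos h, if_pos h, if_neg (by omega), show (i - 1) / 2 = i / 2 - 1 by omega]
      exact h1
    · rw [h3, if_pos h, if_pos h, if_neg (by omega), show (4 * k - 1) / 2 = 2 * k - 1 by omega]
      exact hB0

lemma chiLA_wheel_even {k : ℕ} (hk : 2 ≤ k) (he : k % 2 = 0) : chiLA (wheel (4 * k)) = 3 := by
  refine chiLA_wheel_of_seq (by omega)
    (fun j => if j < k then 2 * k - 1 - 2 * j + j % 2 else 4 * k - 2 * j - j % 2)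
    (fun j => if j % 2 = 0 then 2 * k + 1 + j else
      if j < k then 3 * k + 1 + j else k + 1 + j)
    (fun j => if j < k then (if j % 2 = 0 then 5 * k + 2 + j else 4 * k + 1 + j)
      else (if j % 2 = 0 then 3 * k + 1 + j else 4 * k + 2 + j))
    (fun j => if j < k then (if j % 2 = 0 then 6 * k + 2 + j else 7 * k + 1 + j)
      else if j = k then 5 * k + 1
      else (if j % 2 = 0 then 6 * k + 1 + j else 5 * k + 2 + j))
    ?_ ?_ ?_ ?_ ?_ ?_ ?_ ?_ ?_ ?_ ?_ ?_ hk
  · intro j hj; split_ifs <;> omega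
  · intro j hj; split_ifs <;> omega
  · intro j hj; split_ifs <;> omega
  · intro j hj; split_ifs <;> omega
  · intro i hi j hj
    obtain ⟨c, rfl⟩ : ∃ c, k = 2 * c := ⟨k / 2, by omega⟩
    rcases Nat.mod_two_eq_zero_or_one i with h1 | h1 <;>
    rcases Nat.mod_two_eq_zero_or_one j with h2 | h2 <;>
    simp only [h1, h2] <;>
    obtain ⟨a, ha⟩ : ∃ a, a = i / 2 := ⟨_, rfl⟩ <;>
    obtain ⟨b, hb⟩ : ∃ b, b = j / 2 := ⟨_, rfl⟩ <;>
    split_ifs <;> omega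
  · intro i hi j hj; split_ifs <;> omega
  · intro i hi j hj; split_ifs <;> omega
  · intro i hi j hj; split_ifs <;> omega
  · intro i hi j hj; split_ifs <;> omega
  · intro j hj; split_ifs <;> omega
  · intro j hj h0; split_ifs <;> omega
  · split_ifs <;> omega

lemma chiLA_wheel_odd {k : ℕ} (hk : 3 ≤ k) (he : k % 2 = 1) : chiLA (wheel (4 * k)) = 3 := by
  refine chiLA_wheel_of_seq (by omega)
    (fun j => if j = 0 then 2 * k - 1 else if j = 1 then 2 * k else
      if j ≤ k then 2 * k - 2 * j + j % 2 else 4 * k - 2 * j + j % 2)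
    (fun j => if j % 2 = 0 then
        (if j = 0 then 3 * k + 1 else if j < k then 3 * k + j else 2 * k + 2 + j)
      else if j < k then 2 * k + 1 + j else k + 1 + j)
    (fun j => if j = 1 then 5 * k else if j = k then 7 * k else
      if j < k then (if j % 2 = 0 then 4 * k + 2 + j else 5 * k + j)
      else (if j % 2 = 0 then 3 * k + j else 4 * k + j))
    (fun j => if j = 0 then 6 * k + 2 else if j = 1 then 6 * k else
      if j ≤ k then (if j % 2 = 0 then 7 * k + 1 + j else 6 * k + 1 + j)
      else (if j % 2 = 0 then 6 * k + 1 + j else 5 * k - 1 + j))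
    ?_ ?_ ?_ ?_ ?_ ?_ ?_ ?_ ?_ ?_ ?_ ?_ (by omega)
  · intro j hj; split_ifs <;> omega
  · intro j hj; split_ifs <;> omega
  · intro j hj; split_ifs <;> omega
  · intro j hj; split_ifs <;> omega
  · intro i hi j hj; split_ifs <;> omega
  · intro i hi j hj; split_ifs <;> omega
  · intro i hi j hj; split_ifs <;> omega
  · intro i hi j hj; split_ifs <;> omega
  · intro i hi j hj; split_ifs <;> omega
  · intro j hj; split_ifs <;> omega
  · intro j hj h0; split_ifs <;> omega
  · split_ifs <;> omega

lemma chiLA_wheel_one : chiLA (wheel (4 * 1)) = 3 := by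
  refine chiLA_wheel_of (n := 4 * 1) (by omega) (by omega)
    (fun i => if i = 0 then 2 else if i = 1 then 4 else if i = 2 then 3 else 7)
    (fun i => if i = 0 then 6 else if i = 1 then 5 else if i = 2 then 8 else 1) 11 15
    ?_ ?_ ?_ ?_ ?_ ?_ ?_ ?_ ?_ ?_ <;> decide

theorem chiLA_wheel_4k (k : ℕ) (hk : 1 ≤ k) : chiLA (wheel (4 * k)) = 3 := by
  rcases Nat.lt_or_ge k 2 with h | h
  · have : k = 1 := by omega
    subst this
    exact chiLA_wheel_one
  · rcases Nat.mod_two_eq_zero_or_one k with h2 | h2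
    · exact chiLA_wheel_even h h2
    · exact chiLA_wheel_odd (by omega) h2
end

section
/- Let G be a connected graph with k pendant vertices (vertices of degree 1), and suppose G ≠ K_2. Then χ_la(G) ≥ k + 1. -/
open scoped BigOperators

/-! ### Arithmetic and finite-set lemmas -/

theorem exists_min_nat {α : Type*} (P : α → Prop) (m : α → ℕ) (h : ∃ a, P a) :
    ∃ a, P a ∧ ∀ b, P b → m a ≤ m b := by
  obtain ⟨a, ha, hm⟩ := (measure m).wf.has_min {a | P a} h
  exact ⟨a, ha, fun b hb => not_lt.1 (hm b hb)⟩

theorem sum_exchange (s : Finset ℕ) (l l' : ℕ) (hl : l ∈ s) (hl' : l' ∉ s) :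
    (insert l' (s.erase l)).card = s.card ∧
    (∑ i ∈ insert l' (s.erase l), i) + l = (∑ i ∈ s, i) + l' := by
  have h1 : l' ∉ s.erase l := fun h => hl' (Finset.mem_of_mem_erase h)
  constructor
  · rw [Finset.card_insert_of_notMem h1, Finset.card_erase_add_one hl]
  · rw [Finset.sum_insert h1]
    have := Finset.sum_erase_add s (fun i => i) hl
    omega

/-- A set of labels which works for the leaf edges of a broom, whatever label the
remaining edge receives. -/
theorem universal_of_sum (L L1 : Finset ℕ) (p q : ℕ)
    (h : p + ∑ i ∈ L1, i = q ∨
      ∀ M ⊆ L, M.card = L1.card → p + ∑ i ∈ M, i ≠ q) (hL : L1 ⊆ L) :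
    ∀ l ∈ L1, ∀ l0 ∈ L \ L1, p + (∑ i ∈ L1, i) + l0 ≠ q + l := by
  intro l hl l0 hl0 heq
  rw [Finset.mem_sdiff] at hl0
  rcases h with h | h
  · have : l0 = l := by omega
    exact hl0.2 (this ▸ hl)
  · obtain ⟨h1, h2⟩ := sum_exchange L1 l l0 hl hl0.2
    refine h (insert l0 (L1.erase l)) ?_ h1 (by omega)
    intro i hi
    rcases Finset.mem_insert.1 hi with rfl | hi
    · exact hl0.1
    · exact hL (Finset.mem_of_mem_erase hi)

theorem ds_half (p r q c l l' : ℕ) (L1 L2 : Finset ℕ)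
    (h12 : Disjoint L1 L2) (hc1 : c ∉ L1) (hc2 : c ∉ L2)
    (hs1 : p + ∑ i ∈ L1, i = q) (hs2 : r + ∑ i ∈ L2, i = q)
    (hl : l ∈ L1) (hl' : l' ∈ L2) (v : ℕ) (hv : v ∈ L1) (hvl : v ≠ l) (hvc : v + l = c + l') :
    ∃ (l0 : ℕ) (M1 M2 : Finset ℕ), insert l0 (M1 ∪ M2) ⊆ insert c (L1 ∪ L2) ∧
      l0 ∉ M1 ∧ l0 ∉ M2 ∧ Disjoint M1 M2 ∧ M1.card = L1.card ∧ M2.card = L2.card ∧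
      (∀ k ∈ M1, p + l0 + ∑ i ∈ M1, i ≠ q + k) ∧
      (∀ k ∈ M2, r + l0 + ∑ i ∈ M2, i ≠ q + k) ∧
      p + ∑ i ∈ M1, i ≠ r + ∑ i ∈ M2, i := by
  have d := Finset.disjoint_left.1 h12
  have hvl2 : v ∉ L2 := d hv
  have hll2 : l ∉ L2 := d hl
  have hl'1 : l' ∉ L1 := fun h => d h hl'
  have hcl' : c ≠ l' := fun h => hc2 (h ▸ hl')
  have hcl : c ≠ l := fun h => hc1 (h ▸ hl)
  have hcv : c ≠ v := fun h => hc1 (h ▸ hv)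
  obtain ⟨a1, a2⟩ := sum_exchange L1 l c hl hc1
  have hv2 : v ∈ insert c (L1.erase l) := by simp [hvl, hv]
  have hl'2 : l' ∉ insert c (L1.erase l) := by simp [hcl'.symm, hl'1]
  obtain ⟨b1, b2⟩ := sum_exchange _ v l' hv2 hl'2
  obtain ⟨c1, c2⟩ := sum_exchange L2 l' v hl' hvl2
  refine ⟨l, insert l' ((insert c (L1.erase l)).erase v), insert v (L2.erase l'), ?_, ?_, ?_, ?_,
    by omega, by omega, ?_, ?_, ?_⟩
  · intro i; simp only [Finset.mem_insert, Finset.mem_union, Finset.mem_erase]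
    rintro (rfl | (rfl | ⟨_, rfl | ⟨_, h⟩⟩) | rfl | ⟨_, h⟩) <;> tauto
  · simp only [Finset.mem_insert, Finset.mem_erase]
    rintro (rfl | ⟨_, rfl | ⟨h, _⟩⟩) <;> tauto
  · simp only [Finset.mem_insert, Finset.mem_erase]
    rintro (rfl | ⟨_, h⟩) <;> tauto
  · rw [Finset.disjoint_left]
    intro i
    simp only [Finset.mem_insert, Finset.mem_erase]
    rintro (rfl | ⟨h1, rfl | ⟨h2, h3⟩⟩) (rfl | ⟨h4, h5⟩) <;> tauto
  · intro k hk heq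
    have : k = l := by omega
    subst this
    simp only [Finset.mem_insert, Finset.mem_erase] at hk
    rcases hk with rfl | ⟨_, rfl | ⟨h, _⟩⟩ <;> tauto
  · intro k hk heq
    have : k = c := by omega
    subst this
    simp only [Finset.mem_insert, Finset.mem_erase] at hk
    rcases hk with rfl | ⟨_, h⟩ <;> tauto
  · omega

/-- Label choice for a double star all of whose leaves have weight `q`. -/
theorem ds_choice (p r q c : ℕ) (L1 L2 : Finset ℕ)
    (h12 : Disjoint L1 L2) (hc1 : c ∉ L1) (hc2 : c ∉ L2)
    (hs1 : p + ∑ i ∈ L1, i = q) (hs2 : r + ∑ i ∈ L2, i = q)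
    (hn1 : L1.Nonempty) (hn2 : L2.Nonempty) :
    ∃ (l0 : ℕ) (M1 M2 : Finset ℕ), insert l0 (M1 ∪ M2) ⊆ insert c (L1 ∪ L2) ∧
      l0 ∉ M1 ∧ l0 ∉ M2 ∧ Disjoint M1 M2 ∧ M1.card = L1.card ∧ M2.card = L2.card ∧
      (∀ k ∈ M1, p + l0 + ∑ i ∈ M1, i ≠ q + k) ∧
      (∀ k ∈ M2, r + l0 + ∑ i ∈ M2, i ≠ q + k) ∧
      p + ∑ i ∈ M1, i ≠ r + ∑ i ∈ M2, i := by
  obtain ⟨l, hl⟩ := hn1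
  obtain ⟨l', hl'⟩ := hn2
  have d := Finset.disjoint_left.1 h12
  by_cases hA : ∃ v ∈ L1, v ≠ l ∧ v + l = c + l'
  · obtain ⟨v, hv, hvl, hvc⟩ := hA
    exact ds_half p r q c l l' L1 L2 h12 hc1 hc2 hs1 hs2 hl hl' v hv hvl hvc
  by_cases hB : ∃ v ∈ L2, v ≠ l' ∧ v + l' = c + l
  · obtain ⟨v, hv, hvl, hvc⟩ := hB
    obtain ⟨l0, M1, M2, h1, h2, h3, h4, h5, h6, h7, h8, h9⟩ :=
      ds_half r p q c l' l L2 L1 h12.symm hc2 hc1 hs2 hs1 hl' hl v hv hvl hvc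
    refine ⟨l0, M2, M1, ?_, h3, h2, h4.symm, h6, h5, h8, h7, h9.symm⟩
    rw [Finset.union_comm M2, Finset.union_comm L1]; exact h1
  push Not at hA hB
  have hll2 : l ∉ L2 := d hl
  have hl'1 : l' ∉ L1 := fun h => d h hl'
  have hll' : l ≠ l' := fun h => hl'1 (h ▸ hl)
  have hcl' : c ≠ l' := fun h => hc2 (h ▸ hl')
  have hcl : c ≠ l := fun h => hc1 (h ▸ hl)
  obtain ⟨a1, a2⟩ := sum_exchange L1 l l' hl hl'1
  obtain ⟨b1, b2⟩ := sum_exchange L2 l' l hl' hll2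
  refine ⟨c, insert l' (L1.erase l), insert l (L2.erase l'), ?_, ?_, ?_, ?_, a1, b1, ?_, ?_, ?_⟩
  · intro i; simp only [Finset.mem_insert, Finset.mem_union, Finset.mem_erase]
    rintro (rfl | (rfl | ⟨_, h⟩) | rfl | ⟨_, h⟩) <;> tauto
  · simp only [Finset.mem_insert, Finset.mem_erase]; tauto
  · simp only [Finset.mem_insert, Finset.mem_erase]; tauto
  · rw [Finset.disjoint_left]
    intro i
    simp only [Finset.mem_insert, Finset.mem_erase]
    rintro (rfl | ⟨h1, h2⟩) (rfl | ⟨h4, h5⟩) <;> tauto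
  · intro k hk heq
    simp only [Finset.mem_insert, Finset.mem_erase] at hk
    rcases hk with rfl | ⟨h1, h2⟩
    · omega
    · exact hA k h2 h1 (by omega)
  · intro k hk heq
    simp only [Finset.mem_insert, Finset.mem_erase] at hk
    rcases hk with rfl | ⟨h1, h2⟩
    · omega
    · exact hB k h2 h1 (by omega)
  · omega

theorem ds_full (p r q : ℕ) (L L1 : Finset ℕ) (e : ℕ) (hL1 : L1 ⊆ L)
    (hn1 : L1.Nonempty) (he : 1 ≤ e) (hcard : L1.card + e + 1 ≤ L.card)
    (hs1 : p + ∑ i ∈ L1, i = q) :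
    ∃ (l0 : ℕ) (M1 M2 : Finset ℕ), insert l0 (M1 ∪ M2) ⊆ L ∧
      l0 ∉ M1 ∧ l0 ∉ M2 ∧ Disjoint M1 M2 ∧ M1.card = L1.card ∧ M2.card = e ∧
      (∀ k ∈ M1, p + l0 + ∑ i ∈ M1, i ≠ q + k) ∧
      (∀ k ∈ M2, r + l0 + ∑ i ∈ M2, i ≠ q + k) ∧
      p + ∑ i ∈ M1, i ≠ r + ∑ i ∈ M2, i := by
  have hc : e + 1 ≤ (L \ L1).card := by
    rw [Finset.card_sdiff_of_subset hL1]; omega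
  obtain ⟨K, hK, hKc⟩ := Finset.exists_subset_card_eq hc
  have hd : Disjoint L1 K := by
    rw [Finset.disjoint_left]; intro i h1 h2; exact (Finset.mem_sdiff.1 (hK h2)).2 h1
  have d := Finset.disjoint_left.1 hd
  have key : ∀ c ∈ K, L1 ∪ K ⊆ L ∧ c ∉ L1 ∧ c ∉ K.erase c ∧ Disjoint L1 (K.erase c) ∧
      (K.erase c).card = e ∧ (∑ i ∈ K.erase c, i) + c = ∑ i ∈ K, i := by
    intro c hc
    refine ⟨?_, fun h => d h hc, by simp, ?_, ?_, Finset.sum_erase_add K (fun i => i) hc⟩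
    · intro i hi
      rcases Finset.mem_union.1 hi with h | h
      · exact hL1 h
      · exact (Finset.mem_sdiff.1 (hK h)).1
    · exact hd.mono_right (Finset.erase_subset _ _)
    · rw [Finset.card_erase_of_mem hc]; omega
  by_cases hA : ∃ c ∈ K, r + ∑ i ∈ K, i = q + c
  · obtain ⟨c, hcK, hceq⟩ := hA
    obtain ⟨k1, k2, k3, k4, k5, k6⟩ := key c hcK
    obtain ⟨l0, M1, M2, h1, h2, h3, h4, h5, h6, h7⟩ :=
      ds_choice p r q c L1 (K.erase c) k4 k2 k3 hs1 (by omega) hn1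
        (Finset.card_pos.1 (by omega))
    refine ⟨l0, M1, M2, h1.trans ?_, h2, h3, h4, h5, by omega, h7⟩
    intro i hi
    apply k1
    simp only [Finset.mem_insert, Finset.mem_union, Finset.mem_erase] at hi ⊢
    rcases hi with rfl | h | h <;> tauto
  · push Not at hA
    obtain ⟨c, hcK⟩ : K.Nonempty := Finset.card_pos.1 (by omega)
    obtain ⟨k1, k2, k3, k4, k5, k6⟩ := key c hcK
    refine ⟨c, L1, K.erase c, ?_, k2, k3, k4, rfl, k5, ?_, ?_, ?_⟩
    · intro i hi
      apply k1
      simp only [Finset.mem_insert, Finset.mem_union, Finset.mem_erase] at hi ⊢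
      rcases hi with rfl | h | h <;> tauto
    · intro k hk heq
      have : k = c := by omega
      exact k2 (this ▸ hk)
    · intro k hk heq
      exact hA k (Finset.mem_of_mem_erase hk) (by omega)
    · have := hA c hcK
      omega

/-- A bijection avoiding one forbidden value at each point, if these are not all equal. -/
theorem avoid_bij {V : Type*} [DecidableEq V] (A : Finset V) (K : Finset ℕ)
    (hc : A.card = K.card) (R : V → ℕ → Prop)
    (hR : ∀ a i j, R a i → R a j → i = j)
    (hne : ∀ a ∈ A, ∀ i ∈ K, R a i → ∃ a' ∈ A, ¬ R a' i) :
    ∃ g : V → ℕ, Set.InjOn g A ∧ A.image g = K ∧ ∀ a ∈ A, ¬ R a (g a) := by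
  classical
  obtain ⟨g0, hg0⟩ : ∃ g : V → ℕ, Set.InjOn g A ∧ A.image g = K := by
    obtain ⟨e⟩ : Nonempty (A ≃ K) := by
      rw [← Fintype.card_eq]; simpa using hc
    refine ⟨fun v => if h : v ∈ A then e ⟨v, h⟩ else 0, ?_, ?_⟩
    · intro v hv w hw h
      simp only [Finset.mem_coe] at hv hw
      simp only [hv, hw, dif_pos] at h
      have := e.injective (Subtype.ext h)
      simpa using this
    · ext i
      simp only [Finset.mem_image]
      constructor
      · rintro ⟨v, hv, rfl⟩
        simp [hv]
      · intro hi
        refine ⟨e.symm ⟨i, hi⟩, (e.symm ⟨i, hi⟩).2, ?_⟩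
        simp
  obtain ⟨g, hg, hmin⟩ := exists_min_nat
    (fun g : V → ℕ => Set.InjOn g A ∧ A.image g = K)
    (fun g => (A.filter (fun a => R a (g a))).card) ⟨g0, hg0⟩
  refine ⟨g, hg.1, hg.2, ?_⟩
  intro a ha hbad
  obtain ⟨a', ha', hgood⟩ := hne a ha (g a) (hg.2 ▸ Finset.mem_image_of_mem g ha) hbad
  have haa : a ≠ a' := by rintro rfl; exact hgood hbad
  have hsw : ∀ v ∈ A, Equiv.swap a a' v ∈ A := by
    intro v hv
    by_cases h1 : v = a
    · subst h1; rwa [Equiv.swap_apply_left]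
    by_cases h2 : v = a'
    · subst h2; rwa [Equiv.swap_apply_right]
    rwa [Equiv.swap_apply_of_ne_of_ne h1 h2]
  have hP : Set.InjOn (g ∘ Equiv.swap a a') A ∧ A.image (g ∘ Equiv.swap a a') = K := by
    constructor
    · intro v hv w hw h
      exact (Equiv.swap a a').injective (hg.1 (hsw v hv) (hsw w hw) h)
    · rw [← hg.2]
      ext i
      simp only [Finset.mem_image, Function.comp]
      constructor
      · rintro ⟨v, hv, rfl⟩; exact ⟨_, hsw v hv, rfl⟩
      · rintro ⟨v, hv, rfl⟩; exact ⟨_, hsw v hv, by simp⟩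
  have := hmin _ hP
  refine absurd this (not_le.2 (Finset.card_lt_card ?_))
  refine Finset.ssubset_iff_subset_ne.2 ⟨?_, ?_⟩
  · intro v hv
    simp only [Finset.mem_filter, Function.comp] at hv ⊢
    refine ⟨hv.1, ?_⟩
    have h2 := hv.2
    by_cases h1 : v = a
    · subst h1; exact hbad
    by_cases h3 : v = a'
    · subst h3; rw [Equiv.swap_apply_right] at h2; exact absurd h2 hgood
    rwa [Equiv.swap_apply_of_ne_of_ne h1 h3] at h2
  · intro heq
    have : a ∈ A.filter (fun v => R v ((g ∘ Equiv.swap a a') v)) := by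
      rw [heq]; simp [ha, hbad]
    simp only [Finset.mem_filter, Function.comp, Equiv.swap_apply_left] at this
    exact haa (hg.1 ha ha' (hR _ _ _ hbad this.2))
set_option linter.unusedSectionVars false

/-! ### Weighted labelings and removal of edges at a vertex -/

section Weighted

open Classical in
/-- Neighbours of `v` as a finset. -/
noncomputable def nb {V : Type*} [Fintype V] (H : SimpleGraph V) (v : V) : Finset V :=
  Finset.univ.filter (fun w => H.Adj v w)

theorem mem_nb {V : Type*} [Fintype V] (H : SimpleGraph V) (v w : V) :
    w ∈ nb H v ↔ H.Adj v w := by simp [nb]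

theorem mem_nb_symm {V : Type*} [Fintype V] {H : SimpleGraph V} {v w : V}
    (h : w ∈ nb H v) : v ∈ nb H w := by
  rw [mem_nb] at *; exact h.symm

/-- Sum of labels at a vertex. -/
noncomputable def wt {V : Type*} [Fintype V] (H : SimpleGraph V) (f : Sym2 V → ℕ) (v : V) : ℕ :=
  ∑ w ∈ nb H v, f s(v, w)

/-- Weighted version of a local antimagic labeling, with labels in `L`. -/
def Solv {V : Type*} [Fintype V] (H : SimpleGraph V) (b : V → ℕ) (L : Finset ℕ) : Prop :=
  ∃ f : Sym2 V → ℕ, Set.InjOn f H.edgeSet ∧ Set.MapsTo f H.edgeSet L ∧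
    ∀ p q, H.Adj p q → b p + wt H f p ≠ b q + wt H f q

/-- Delete the edges from `x` to `A`. -/
def cut {V : Type*} (H : SimpleGraph V) (x : V) (A : Finset V) : SimpleGraph V :=
  H.deleteEdges ((fun a => s(x, a)) '' (A : Set V))

/-- Weights after deleting the edges from `x` to `A` labeled by `g`. -/
def red {V : Type*} [DecidableEq V] (b : V → ℕ) (x : V) (A : Finset V) (g : V → ℕ) (v : V) : ℕ :=
  b v + (if v = x then ∑ a ∈ A, g a else 0) + (if v ∈ A then g v else 0)

variable {V : Type*} [Fintype V] [DecidableEq V]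

theorem cut_adj (H : SimpleGraph V) (x : V) (A : Finset V) (p q : V) :
    (cut H x A).Adj p q ↔ H.Adj p q ∧ ¬ (p = x ∧ q ∈ A) ∧ ¬ (q = x ∧ p ∈ A) := by
  unfold cut
  rw [SimpleGraph.deleteEdges_adj]
  simp only [Set.mem_image, Finset.mem_coe, Sym2.eq_iff]
  constructor
  · rintro ⟨h, h2⟩
    refine ⟨h, ?_, ?_⟩
    · rintro ⟨rfl, hq⟩; exact h2 ⟨q, hq, Or.inl ⟨rfl, rfl⟩⟩
    · rintro ⟨rfl, hq⟩; exact h2 ⟨p, hq, Or.inr ⟨rfl, rfl⟩⟩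
  · rintro ⟨h, h2, h3⟩
    refine ⟨h, ?_⟩
    rintro ⟨a, ha, ⟨rfl, rfl⟩ | ⟨rfl, rfl⟩⟩
    · exact h2 ⟨rfl, ha⟩
    · exact h3 ⟨rfl, ha⟩

theorem not_mem_of_sub {H : SimpleGraph V} {x : V} {A : Finset V} (hA : A ⊆ nb H x) : x ∉ A := by
  intro h
  have := hA h
  rw [mem_nb] at this
  exact this.ne rfl

theorem nb_cut_self (H : SimpleGraph V) (x : V) (A : Finset V) (hA : A ⊆ nb H x) :
    nb (cut H x A) x = nb H x \ A := by
  have := not_mem_of_sub hA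
  ext w
  simp only [mem_nb, cut_adj, Finset.mem_sdiff]
  tauto

theorem nb_cut_mem (H : SimpleGraph V) (x : V) (A : Finset V) (hA : A ⊆ nb H x) (p : V)
    (hp : p ∈ A) : nb (cut H x A) p = (nb H p).erase x := by
  have := not_mem_of_sub hA
  ext w
  simp only [mem_nb, cut_adj, Finset.mem_erase]
  constructor
  · rintro ⟨h1, h2, h3⟩; exact ⟨fun h => h3 ⟨h, hp⟩, h1⟩
  · rintro ⟨h1, h2⟩
    exact ⟨h2, fun h => this (h.1 ▸ hp), fun h => h1 h.1⟩

theorem nb_cut_other (H : SimpleGraph V) (x : V) (A : Finset V) (p : V)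
    (hx : p ≠ x) (hp : p ∉ A) : nb (cut H x A) p = nb H p := by
  ext w
  simp only [mem_nb, cut_adj]
  tauto

theorem red_other (b : V → ℕ) (x : V) (A : Finset V) (g : V → ℕ) (p : V)
    (hx : p ≠ x) (hp : p ∉ A) : red b x A g p = b p := by
  simp [red, hx, hp]

theorem red_self (b : V → ℕ) (x : V) (A : Finset V) (g : V → ℕ) 
    (hp : x ∉ A) : red b x A g x = b x + ∑ a ∈ A, g a := by
  simp [red, hp]

theorem red_mem (b : V → ℕ) (x : V) (A : Finset V) (g : V → ℕ) (p : V)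
    (hx : x ∉ A) (hp : p ∈ A) : red b x A g p = b p + g p := by
  have : p ≠ x := by rintro rfl; exact hx hp
  simp [red, hp, this]

theorem card_cut (H : SimpleGraph V) (x : V) (A : Finset V) (hA : A ⊆ nb H x) :
    (cut H x A).edgeSet.ncard + A.card = H.edgeSet.ncard := by
  have h1 : ((fun a => s(x, a)) '' (A : Set V)).ncard = A.card := by
    rw [Set.ncard_image_of_injective, Set.ncard_coe_finset]
    intro a b h
    exact Sym2.congr_right.1 h
  have h2 : ((fun a => s(x, a)) '' (A : Set V)) ⊆ H.edgeSet := by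
    rintro _ ⟨a, ha, rfl⟩
    exact (mem_nb H x a).1 (hA ha)
  unfold cut
  rw [SimpleGraph.edgeSet_deleteEdges, ← h1]
  exact Set.ncard_sdiff_add_ncard_of_subset h2 (Set.toFinite _)

theorem card_nb_le (H : SimpleGraph V) (x : V) : (nb H x).card ≤ H.edgeSet.ncard := by
  have := card_cut H x (nb H x) (Finset.Subset.refl _)
  omega

theorem extend_cut (H : SimpleGraph V) (b : V → ℕ) (L : Finset ℕ) (x : V) (A : Finset V)
    (hA : A ⊆ nb H x) (g : V → ℕ) (hg : Set.InjOn g A) (hgL : A.image g ⊆ L)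
    (f' : Sym2 V → ℕ) (hinj : Set.InjOn f' (cut H x A).edgeSet)
    (hmap : Set.MapsTo f' (cut H x A).edgeSet (L \ A.image g : Finset ℕ)) :
    ∃ f : Sym2 V → ℕ, Set.InjOn f H.edgeSet ∧ Set.MapsTo f H.edgeSet L ∧
      (∀ v, b v + wt H f v = red b x A g v + wt (cut H x A) f' v) ∧
      (∀ a ∈ A, f s(x, a) = g a) ∧
      (∀ e ∈ (cut H x A).edgeSet, f e = f' e) := by
  classical
  have hxA := not_mem_of_sub hA
  let f : Sym2 V → ℕ := fun e => if h : ∃ a ∈ A, s(x, a) = e then g h.choose else f' e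
  have f1 : ∀ a ∈ A, f s(x, a) = g a := by
    intro a ha
    have h : ∃ a' ∈ A, s(x, a') = s(x, a) := ⟨a, ha, rfl⟩
    have h2 := h.choose_spec.2
    have h3 : h.choose = a := Sym2.congr_right.1 h2
    simp only [f, dif_pos h, h3]
  have f2 : ∀ e, (¬ ∃ a ∈ A, s(x, a) = e) → f e = f' e := by
    intro e h
    simp only [f, dif_neg h]
  have hedge : ∀ e ∈ H.edgeSet, (¬ ∃ a ∈ A, s(x, a) = e) → e ∈ (cut H x A).edgeSet := by
    intro e he h
    unfold cut
    rw [SimpleGraph.edgeSet_deleteEdges]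
    exact ⟨he, by simpa using h⟩
  have hedge2 : ∀ e ∈ (cut H x A).edgeSet, (¬ ∃ a ∈ A, s(x, a) = e) := by
    intro e he
    unfold cut at he
    rw [SimpleGraph.edgeSet_deleteEdges] at he
    simpa using he.2
  have f3 : ∀ e ∈ (cut H x A).edgeSet, f e = f' e := fun e he => f2 e (hedge2 e he)
  refine ⟨f, ?_, ?_, ?_, f1, f3⟩
  · intro e he e' he' heq
    by_cases h : ∃ a ∈ A, s(x, a) = e <;> by_cases h' : ∃ a ∈ A, s(x, a) = e'
    · obtain ⟨a, ha, rfl⟩ := h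
      obtain ⟨a', ha', rfl⟩ := h'
      rw [f1 a ha, f1 a' ha'] at heq
      rw [hg ha ha' heq]
    · obtain ⟨a, ha, rfl⟩ := h
      rw [f1 a ha, f2 _ h'] at heq
      have := hmap (hedge _ he' h')
      rw [← heq] at this
      simp only [Finset.coe_sdiff, Set.mem_sdiff, Finset.mem_coe] at this
      exact absurd (Finset.mem_image_of_mem g ha) this.2
    · obtain ⟨a, ha, rfl⟩ := h'
      rw [f1 a ha, f2 _ h] at heq
      have := hmap (hedge _ he h)
      rw [heq] at this
      simp only [Finset.coe_sdiff, Set.mem_sdiff, Finset.mem_coe] at this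
      exact absurd (Finset.mem_image_of_mem g ha) this.2
    · rw [f2 _ h, f2 _ h'] at heq
      exact hinj (hedge _ he h) (hedge _ he' h') heq
  · intro e he
    by_cases h : ∃ a ∈ A, s(x, a) = e
    · obtain ⟨a, ha, rfl⟩ := h
      rw [f1 a ha]
      exact hgL (Finset.mem_image_of_mem g ha)
    · rw [f2 _ h]
      exact (Finset.mem_sdiff.1 (hmap (hedge _ he h))).1
  · have hsum : ∀ v, ∑ w ∈ nb (cut H x A) v, f s(v, w) = wt (cut H x A) f' v := by
      intro v
      apply Finset.sum_congr rfl
      intro w hw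
      exact f3 _ ((mem_nb _ _ _).1 hw)
    intro v
    by_cases hv : v = x
    · subst hv
      rw [red_self _ _ _ _ hxA, ← hsum, nb_cut_self H v A hA]
      unfold wt
      rw [← Finset.sum_sdiff hA, Finset.sum_congr rfl f1]
      ring
    by_cases hvA : v ∈ A
    · rw [red_mem _ _ _ _ _ hxA hvA, ← hsum, nb_cut_mem H x A hA v hvA]
      unfold wt
      have hx : x ∈ nb H v := mem_nb_symm (hA hvA)
      rw [← Finset.sum_erase_add _ _ hx, Sym2.eq_swap, f1 v hvA]
      ring
    · rw [red_other _ _ _ _ _ hv hvA, ← hsum, nb_cut_other H x A v hv hvA]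
      rfl

/-- No component is a tied star. -/
def NT (H : SimpleGraph V) (b : V → ℕ) : Prop :=
  ∀ x, (nb H x).Nonempty → (∀ y ∈ nb H x, (nb H y).card = 1) →
    ((nb H x).card = 1 → ∀ y ∈ nb H x, b x ≠ b y) ∧
    (2 ≤ (nb H x).card → ∃ y ∈ nb H x, ∃ y' ∈ nb H x, b y ≠ b y')

theorem nb_card_one {H : SimpleGraph V} {x y : V} (h : y ∈ nb H x) (h1 : (nb H y).card = 1) :
    nb H y = {x} := by
  obtain ⟨z, hz⟩ := Finset.card_eq_one.1 h1
  have := mem_nb_symm h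
  rw [hz, Finset.mem_singleton] at this
  rw [hz, this]

theorem wt_empty {H : SimpleGraph V} {v : V} (f : Sym2 V → ℕ) (h : nb H v = ∅) :
    wt H f v = 0 := by simp [wt, h]

/-- Removing a whole star whose labels are chosen explicitly. -/
theorem star_remove_strong (H : SimpleGraph V) (b : V → ℕ) (L : Finset ℕ) (x : V)
    (hleaf : ∀ y ∈ nb H x, (nb H y).card = 1) (g : V → ℕ) (hg : Set.InjOn g (nb H x))
    (hgL : (nb H x).image g ⊆ L)
    (hcon : ∀ a ∈ nb H x, b x + ∑ a ∈ nb H x, g a ≠ b a + g a)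
    (h : Solv (cut H x (nb H x)) (red b x (nb H x) g) (L \ (nb H x).image g)) :
    ∃ f : Sym2 V → ℕ, (Set.InjOn f H.edgeSet ∧ Set.MapsTo f H.edgeSet L ∧
      ∀ p q, H.Adj p q → b p + wt H f p ≠ b q + wt H f q) ∧ ∀ a ∈ nb H x, f s(x, a) = g a := by
  have hA := Finset.Subset.refl (nb H x)
  have hxA := not_mem_of_sub hA
  obtain ⟨f', h1, h2, h3⟩ := h
  obtain ⟨f, i1, i2, i3, i4, i5⟩ := extend_cut H b L x _ hA g hg hgL f' h1 h2
  have hx0 : wt (cut H x (nb H x)) f' x = 0 := by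
    apply wt_empty; rw [nb_cut_self _ _ _ hA]; simp
  have hy0 : ∀ y ∈ nb H x, wt (cut H x (nb H x)) f' y = 0 := by
    intro y hy
    apply wt_empty; rw [nb_cut_mem _ _ _ hA y hy, nb_card_one hy (hleaf y hy)]; simp
  have hc : ∀ a ∈ nb H x, b x + wt H f x ≠ b a + wt H f a := by
    intro a ha
    rw [i3, i3, hx0, hy0 a ha, red_self _ _ _ _ hxA, red_mem _ _ _ _ _ hxA ha]
    exact hcon a ha
  refine ⟨f, ⟨i1, i2, ?_⟩, i4⟩
  intro p q hpq
  by_cases hp : p = x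
  · subst hp; exact hc q ((mem_nb _ _ _).2 hpq)
  by_cases hq : q = x
  · subst hq; exact (hc p ((mem_nb _ _ _).2 hpq.symm)).symm
  rw [i3, i3]
  apply h3
  rw [cut_adj]
  tauto

theorem star_remove (H : SimpleGraph V) (b : V → ℕ) (L : Finset ℕ) (x : V)
    (hleaf : ∀ y ∈ nb H x, (nb H y).card = 1) (g : V → ℕ) (hg : Set.InjOn g (nb H x))
    (hgL : (nb H x).image g ⊆ L)
    (hcon : ∀ a ∈ nb H x, b x + ∑ a ∈ nb H x, g a ≠ b a + g a)
    (h : Solv (cut H x (nb H x)) (red b x (nb H x) g) (L \ (nb H x).image g)) :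
    Solv H b L := by
  obtain ⟨f, hf, -⟩ := star_remove_strong H b L x hleaf g hg hgL hcon h
  exact ⟨f, hf⟩

/-- The no-tie condition at one centre. -/
def NTat (H : SimpleGraph V) (b : V → ℕ) (x : V) : Prop :=
  (nb H x).Nonempty → (∀ y ∈ nb H x, (nb H y).card = 1) →
    ((nb H x).card = 1 → ∀ y ∈ nb H x, b x ≠ b y) ∧
    (2 ≤ (nb H x).card → ∃ y ∈ nb H x, ∃ y' ∈ nb H x, b y ≠ b y')

theorem NTat_cut (H : SimpleGraph V) (b : V → ℕ) (x : V) (A : Finset V) (g : V → ℕ) (x' : V)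
    (hx' : x' ≠ x) (hx'A : x' ∉ A) (hy : ∀ y ∈ nb H x', y ≠ x ∧ y ∉ A) (h : NTat H b x') :
    NTat (cut H x A) (red b x A g) x' := by
  intro hne hl
  have hn := nb_cut_other H x A x' hx' hx'A
  rw [hn] at hne hl ⊢
  have hb : ∀ y ∈ nb H x', red b x A g y = b y :=
    fun y h => red_other _ _ _ _ _ (hy y h).1 (hy y h).2
  obtain ⟨r1, r2⟩ := h hne (fun y h => by
    rw [← nb_cut_other H x A y (hy y h).1 (hy y h).2]; exact hl y h)
  refine ⟨?_, ?_⟩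
  · intro hc y h
    rw [hb y h, red_other _ _ _ _ _ hx' hx'A]
    exact r1 hc y h
  · intro hc
    obtain ⟨y, hy, y', hy', hne⟩ := r2 hc
    exact ⟨y, hy, y', hy', by rwa [hb y hy, hb y' hy']⟩

theorem NTat_empty {H : SimpleGraph V} {b : V → ℕ} {x : V} (h : nb H x = ∅) : NTat H b x := by
  intro hne
  rw [h] at hne
  simp at hne

theorem NT_star (H : SimpleGraph V) (b : V → ℕ) (x : V)
    (hNT : ∀ x', x' ≠ x → x' ∉ nb H x → NTat H b x')
    (hleaf : ∀ y ∈ nb H x, (nb H y).card = 1) (g : V → ℕ) :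
    NT (cut H x (nb H x)) (red b x (nb H x) g) := by
  have hA := Finset.Subset.refl (nb H x)
  intro x'
  by_cases hx' : x' = x
  · subst hx'
    exact NTat_empty (by rw [nb_cut_self _ _ _ hA]; simp)
  by_cases hx'A : x' ∈ nb H x
  · exact NTat_empty (by rw [nb_cut_mem _ _ _ hA x' hx'A, nb_card_one hx'A (hleaf x' hx'A)]; simp)
  refine NTat_cut H b x _ g x' hx' hx'A ?_ (hNT x' hx' hx'A)
  intro y hy
  refine ⟨?_, ?_⟩
  · rintro rfl; exact hx'A (mem_nb_symm hy)
  · intro h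
    have := nb_card_one h (hleaf y h)
    have h2 := mem_nb_symm hy
    rw [this] at h2
    exact hx' (by simpa using h2)

/-- Star step. -/
theorem star_step (H : SimpleGraph V) (b : V → ℕ) (L : Finset ℕ) (hNT : NT H b)
    (hL : H.edgeSet.ncard ≤ L.card) (x : V) (hne : (nb H x).Nonempty)
    (hleaf : ∀ y ∈ nb H x, (nb H y).card = 1)
    (IH : ∀ (H' : SimpleGraph V) (b' : V → ℕ) (L' : Finset ℕ),
      H'.edgeSet.ncard < H.edgeSet.ncard → NT H' b' → H'.edgeSet.ncard ≤ L'.card →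
      Solv H' b' L') : Solv H b L := by
  have hA := Finset.Subset.refl (nb H x)
  have hcard := card_cut H x _ hA
  have hpos := Finset.card_pos.2 hne
  obtain ⟨K, hK, hKc⟩ := Finset.exists_subset_card_eq
    (show (nb H x).card ≤ L.card by omega)
  obtain ⟨r1, r2⟩ := hNT x hne hleaf
  obtain ⟨g, g1, g2, g3⟩ := avoid_bij (nb H x) K hKc.symm
    (fun a i => b x + ∑ i ∈ K, i = b a + i) (fun a i j h h' => by omega) (by
      intro a ha i hi heq
      by_contra hcon
      push Not at hcon
      by_cases hc : (nb H x).card = 1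
      · have : K = {i} := by
          obtain ⟨j, rfl⟩ := Finset.card_eq_one.1 (hKc.trans hc)
          simp at hi; rw [hi]
        have h := r1 hc a ha
        rw [this] at heq
        simp at heq
        exact h heq
      · obtain ⟨y, hy, y', hy', hyy⟩ := r2 (by omega)
        have e1 := hcon y hy
        have e2 := hcon y' hy'
        omega)
  have hsum : ∑ a ∈ nb H x, g a = ∑ i ∈ K, i := by
    rw [← g2, Finset.sum_image g1]
  apply star_remove H b L x hleaf g g1 (g2 ▸ hK)
  · intro a ha
    rw [hsum]
    exact g3 a ha
  · apply IH
    · omega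
    · exact NT_star H b x (fun x' _ _ => hNT x') hleaf g
    · rw [Finset.card_sdiff_of_subset (g2 ▸ hK), g2]
      omega

/-! ### Equal brooms -/

/-- `A` is the set of neighbours of `x` other than `u`; all are leaves. -/
structure Broom (H : SimpleGraph V) (x u : V) : Prop where
  hu : u ∈ nb H x
  hu2 : 2 ≤ (nb H u).card
  hne : ((nb H x).erase u).Nonempty
  hleaf : ∀ a ∈ (nb H x).erase u, (nb H a).card = 1

theorem Broom.u_ne {H : SimpleGraph V} {x u : V} (h : Broom H x u) : u ≠ x := by
  have := (mem_nb _ _ _).1 h.hu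
  exact this.ne'

theorem Broom.sub {H : SimpleGraph V} {x u : V} (_h : Broom H x u) :
    (nb H x).erase u ⊆ nb H x := Finset.erase_subset _ _

theorem Broom.u_notin {H : SimpleGraph V} {x u : V} (_h : Broom H x u) :
    u ∉ (nb H x).erase u := by simp

theorem Broom.nb_leaf {H : SimpleGraph V} {x u : V} (h : Broom H x u) {a : V}
    (ha : a ∈ (nb H x).erase u) : nb H a = {x} :=
  nb_card_one (h.sub ha) (h.hleaf a ha)

theorem Broom.nb_cut_x {H : SimpleGraph V} {x u : V} (h : Broom H x u) :
    nb (cut H x ((nb H x).erase u)) x = {u} := by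
  rw [nb_cut_self _ _ _ h.sub]
  ext w
  simp only [Finset.mem_sdiff, Finset.mem_erase, Finset.mem_singleton]
  constructor
  · rintro ⟨h1, h2⟩; by_contra h3; exact h2 ⟨h3, h1⟩
  · rintro rfl; exact ⟨h.hu, fun h => h.1 rfl⟩

theorem Broom.nb_cut_leaf {H : SimpleGraph V} {x u : V} (h : Broom H x u) {a : V}
    (ha : a ∈ (nb H x).erase u) : nb (cut H x ((nb H x).erase u)) a = ∅ := by
  rw [nb_cut_mem _ _ _ h.sub a ha, h.nb_leaf ha]; simp

theorem Broom.nb_cut_u {H : SimpleGraph V} {x u : V} (h : Broom H x u) :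
    nb (cut H x ((nb H x).erase u)) u = nb H u :=
  nb_cut_other _ _ _ _ h.u_ne h.u_notin

theorem Broom.z_notin {H : SimpleGraph V} {x u z : V} (h : Broom H x u) (hz : z ∈ nb H u) :
    z ∉ (nb H x).erase u := by
  intro h2
  have := mem_nb_symm hz
  rw [h.nb_leaf h2, Finset.mem_singleton] at this
  exact h.u_ne this

theorem Broom.NTat_other {H : SimpleGraph V} {x u : V} (h : Broom H x u) {b : V → ℕ}
    (hNT : NT H b) (g : V → ℕ) (x' : V) (hx' : x' ≠ u) (hx : x' ≠ x) :
    NTat (cut H x ((nb H x).erase u)) (red b x ((nb H x).erase u) g) x' := by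
  by_cases hA : x' ∈ (nb H x).erase u
  · exact NTat_empty (h.nb_cut_leaf hA)
  refine NTat_cut H b x _ g x' hx hA ?_ (hNT x')
  intro y hy
  refine ⟨?_, ?_⟩
  · rintro rfl
    exact hA (Finset.mem_erase.2 ⟨hx', mem_nb_symm hy⟩)
  · intro h2
    have := mem_nb_symm hy
    rw [h.nb_leaf h2, Finset.mem_singleton] at this
    exact hx this

theorem Broom.NT_cut {H : SimpleGraph V} {x u : V} (h : Broom H x u) {b : V → ℕ}
    (hNT : NT H b) (g : V → ℕ)
    (hc : (∀ z ∈ nb H u, z ≠ x → (nb H z).card = 1) →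
      ∃ z ∈ nb H u, z ≠ x ∧ b x + ∑ a ∈ (nb H x).erase u, g a ≠ b z) :
    NT (cut H x ((nb H x).erase u)) (red b x ((nb H x).erase u) g) := by
  intro x'
  by_cases hx : x' = x
  · subst hx
    intro _ hl
    have := hl u (by rw [h.nb_cut_x]; simp)
    rw [h.nb_cut_u] at this
    have := h.hu2
    omega
  by_cases hu : x' = u
  · subst hu
    intro _ hl
    rw [h.nb_cut_u] at hl ⊢
    have h2 := h.hu2
    refine ⟨fun h => by omega, fun _ => ?_⟩
    obtain ⟨z, hz, hzx, hne⟩ := hc (fun z hz hzx => by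
      rw [← nb_cut_other H x ((nb H x).erase x') z hzx (h.z_notin hz)]
      exact hl z hz)
    refine ⟨x, mem_nb_symm h.hu, z, hz, ?_⟩
    rw [red_self _ _ _ _ (not_mem_of_sub h.sub), red_other _ _ _ _ _ hzx (h.z_notin hz)]
    exact hne
  · exact h.NTat_other hNT g x' hu hx

theorem Broom.extend {H : SimpleGraph V} {x u : V} (h : Broom H x u) {b : V → ℕ} {L : Finset ℕ}
    (g : V → ℕ) (hg : Set.InjOn g ((nb H x).erase u : Finset V))
    (hgL : ((nb H x).erase u).image g ⊆ L) (f' : Sym2 V → ℕ)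
    (h1 : Set.InjOn f' (cut H x ((nb H x).erase u)).edgeSet)
    (h2 : Set.MapsTo f' (cut H x ((nb H x).erase u)).edgeSet
      (L \ ((nb H x).erase u).image g : Finset ℕ))
    (h3 : ∀ p q, (cut H x ((nb H x).erase u)).Adj p q →
      red b x ((nb H x).erase u) g p + wt (cut H x ((nb H x).erase u)) f' p ≠
      red b x ((nb H x).erase u) g q + wt (cut H x ((nb H x).erase u)) f' q)
    (hcon : ∀ a ∈ (nb H x).erase u,
      b x + ∑ a ∈ (nb H x).erase u, g a + f' s(x, u) ≠ b a + g a) : Solv H b L := by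
  obtain ⟨f, i1, i2, i3, i4, i5⟩ := extend_cut H b L x _ h.sub g hg hgL f' h1 h2
  have hxA := not_mem_of_sub h.sub
  have hc : ∀ a ∈ (nb H x).erase u, b x + wt H f x ≠ b a + wt H f a := by
    intro a ha
    rw [i3, i3, wt_empty _ (h.nb_cut_leaf ha), red_self _ _ _ _ hxA, red_mem _ _ _ _ _ hxA ha]
    unfold wt
    rw [h.nb_cut_x, Finset.sum_singleton]
    exact hcon a ha
  refine ⟨f, i1, i2, ?_⟩
  intro p q hpq
  by_cases hp : p = x ∧ q ∈ (nb H x).erase u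
  · obtain ⟨rfl, hq⟩ := hp; exact hc q hq
  by_cases hq : q = x ∧ p ∈ (nb H x).erase u
  · obtain ⟨rfl, hp⟩ := hq; exact (hc p hp).symm
  rw [i3, i3]
  apply h3
  rw [cut_adj]
  exact ⟨hpq, hp, hq⟩

theorem Broom.edge_u {H : SimpleGraph V} {x u : V} (h : Broom H x u) :
    s(x, u) ∈ (cut H x ((nb H x).erase u)).edgeSet := by
  rw [SimpleGraph.mem_edgeSet, ← mem_nb, h.nb_cut_x]; simp

theorem plain_bij (A : Finset V) (K : Finset ℕ) (hc : A.card = K.card) :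
    ∃ g : V → ℕ, Set.InjOn g A ∧ A.image g = K := by
  obtain ⟨g, h1, h2, -⟩ := avoid_bij A K hc (fun _ _ => False) (by tauto) (by tauto)
  exact ⟨g, h1, h2⟩

theorem Broom.finish {H : SimpleGraph V} {x u : V} (h : Broom H x u) {b : V → ℕ} {L : Finset ℕ}
    (hNT : NT H b) (hL : H.edgeSet.ncard ≤ L.card) (β : ℕ)
    (hβ : ∀ a ∈ (nb H x).erase u, b a = β)
    (IH : ∀ (H' : SimpleGraph V) (b' : V → ℕ) (L' : Finset ℕ),
      H'.edgeSet.ncard < H.edgeSet.ncard → NT H' b' → H'.edgeSet.ncard ≤ L'.card →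
      Solv H' b' L') (L1 : Finset ℕ) (hL1 : L1 ⊆ L) (hc1 : L1.card = ((nb H x).erase u).card)
    (hU : b x + ∑ i ∈ L1, i = β ∨ ∀ M ⊆ L, M.card = L1.card → b x + ∑ i ∈ M, i ≠ β)
    (hc : (∀ z ∈ nb H u, z ≠ x → (nb H z).card = 1) →
      ∃ z ∈ nb H u, z ≠ x ∧ b x + ∑ i ∈ L1, i ≠ b z) : Solv H b L := by
  obtain ⟨g, g1, g2⟩ := plain_bij _ L1 hc1.symm
  have hsum : ∑ a ∈ (nb H x).erase u, g a = ∑ i ∈ L1, i := by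
    rw [← g2, Finset.sum_image g1]
  have hcard := card_cut H x _ h.sub
  have hpos := Finset.card_pos.2 h.hne
  obtain ⟨f', h1, h2, h3⟩ := IH (cut H x ((nb H x).erase u)) (red b x ((nb H x).erase u) g)
    (L \ L1) (by omega) (h.NT_cut hNT g (by rw [hsum]; exact hc))
    (by rw [Finset.card_sdiff_of_subset hL1]; omega)
  refine h.extend g g1 (g2 ▸ hL1) f' h1 (by rw [g2]; exact h2) h3 ?_
  intro a ha
  rw [hsum, hβ a ha]
  exact universal_of_sum L L1 (b x) β hU hL1 (g a) (by rw [← g2]; exact Finset.mem_image_of_mem g ha)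
    _ (h2 h.edge_u)

theorem Broom.double {H : SimpleGraph V} {x u : V} (h : Broom H x u) {b : V → ℕ} {L : Finset ℕ}
    (hNT : NT H b) (hL : H.edgeSet.ncard ≤ L.card) (β : ℕ)
    (hβ : ∀ a ∈ (nb H x).erase u, b a = β)
    (IH : ∀ (H' : SimpleGraph V) (b' : V → ℕ) (L' : Finset ℕ),
      H'.edgeSet.ncard < H.edgeSet.ncard → NT H' b' → H'.edgeSet.ncard ≤ L'.card →
      Solv H' b' L') (L1 : Finset ℕ) (hL1 : L1 ⊆ L) (hc1 : L1.card = ((nb H x).erase u).card)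
    (hU : b x + ∑ i ∈ L1, i = β)
    (hz : ∀ z ∈ nb H u, z ≠ x → (nb H z).card = 1)
    (hzβ : ∀ z ∈ nb H u, z ≠ x → b z = β) : Solv H b L := by
  have hcard := card_cut H x _ h.sub
  have hpos := Finset.card_pos.2 h.hne
  have hxA := not_mem_of_sub h.sub
  have hle := card_nb_le (cut H x ((nb H x).erase u)) u
  rw [h.nb_cut_u] at hle
  have hxu : x ∈ nb H u := mem_nb_symm h.hu
  have hu2 := h.hu2
  have hce := Finset.card_erase_of_mem hxu
  obtain ⟨l0, M1, M2, m1, m2, m3, m4, m5, m6, m7, m8, m9⟩ := ds_full (b x) (b u) β L L1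
    ((nb H u).erase x).card hL1 (Finset.card_pos.1 (by omega)) (by omega) (by omega) hU
  obtain ⟨g, g1, g2⟩ := plain_bij _ M1 (hc1.symm.trans m5.symm)
  obtain ⟨k, k1, k2⟩ := plain_bij _ M2 m6.symm
  have hsum : ∑ a ∈ (nb H x).erase u, g a = ∑ i ∈ M1, i := by
    rw [← g2, Finset.sum_image g1]
  have hsumk : ∑ a ∈ (nb H u).erase x, k a = ∑ i ∈ M2, i := by
    rw [← k2, Finset.sum_image k1]
  have hkM : ∀ a ∈ nb H u, a ≠ x → k a ∈ M2 := fun a ha hax => by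
    rw [← k2]; exact Finset.mem_image_of_mem k (Finset.mem_erase.2 ⟨hax, ha⟩)
  have hM1L : M1 ⊆ L := fun i hi => m1 (by simp [hi])
  set H1 := cut H x ((nb H x).erase u) with hH1
  have hn1 : nb H1 u = nb H u := h.nb_cut_u
  let g' : V → ℕ := fun v => if v = x then l0 else k v
  have hg'x : g' x = l0 := by simp [g']
  have hg'o : ∀ v, v ≠ x → g' v = k v := fun v hv => by simp [g', hv]
  have himg : (nb H1 u).image g' = insert l0 M2 := by
    rw [hn1, ← Finset.insert_erase hxu, Finset.image_insert, hg'x, ← k2]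
    congr 1
    apply Finset.image_congr
    intro a ha
    exact hg'o a (Finset.ne_of_mem_erase ha)
  have hsum' : ∑ a ∈ nb H1 u, g' a = l0 + ∑ i ∈ M2, i := by
    rw [hn1, ← Finset.add_sum_erase _ _ hxu, hg'x, ← hsumk]
    congr 1
    apply Finset.sum_congr rfl
    intro a ha
    exact hg'o a (Finset.ne_of_mem_erase ha)
  have hinj : Set.InjOn g' (nb H1 u) := by
    rw [hn1]
    intro a ha c hc heq
    by_cases hax : a = x <;> by_cases hcx : c = x
    · rw [hax, hcx]
    · rw [hax, hg'x, hg'o c hcx] at heq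
      exact absurd (heq ▸ hkM c hc hcx) m3
    · rw [hcx, hg'x, hg'o a hax] at heq
      exact absurd (heq ▸ hkM a ha hax) m3
    · rw [hg'o a hax, hg'o c hcx] at heq
      exact k1 (Finset.mem_erase.2 ⟨hax, ha⟩) (Finset.mem_erase.2 ⟨hcx, hc⟩) heq
  have hleaf1 : ∀ y ∈ nb H1 u, (nb H1 y).card = 1 := by
    intro y hy
    rw [hn1] at hy
    by_cases hyx : y = x
    · rw [hyx, h.nb_cut_x]; simp
    · rw [nb_cut_other H x _ y hyx (h.z_notin hy)]; exact hz y hy hyx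
  have hsub : insert l0 M2 ⊆ L \ M1 := by
    intro i hi
    rw [Finset.mem_insert] at hi
    rw [Finset.mem_sdiff]
    rcases hi with rfl | hi
    · exact ⟨m1 (by simp), m2⟩
    · exact ⟨m1 (by simp [hi]), fun h' => Finset.disjoint_left.1 m4 h' hi⟩
  have hc2 := card_cut H1 u _ (Finset.Subset.refl _)
  rw [hn1] at hc2
  obtain ⟨f', ⟨h1, h2, h3⟩, h4⟩ := star_remove_strong H1 (red b x ((nb H x).erase u) g) (L \ M1) u
    hleaf1 g' hinj (by rw [himg]; exact hsub) (by
      intro a ha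
      rw [hsum', red_other _ _ _ _ _ h.u_ne h.u_notin]
      by_cases hax : a = x
      · rw [hax, hg'x, red_self _ _ _ _ hxA, hsum]; omega
      · rw [hn1] at ha
        rw [hg'o a hax, red_other _ _ _ _ _ hax (h.z_notin ha), hzβ a ha hax]
        have := m8 _ (hkM a ha hax)
        omega) (by
      apply IH
      · rw [hn1]; omega
      · apply NT_star H1 _ u _ hleaf1
        intro x' hx' hx'n
        apply h.NTat_other hNT g x' hx'
        rintro rfl
        rw [hn1] at hx'n
        exact hx'n hxu
      · rw [himg, Finset.card_sdiff_of_subset hsub, Finset.card_sdiff_of_subset hM1L,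
          Finset.card_insert_of_notMem m3, hn1]
        omega)
  refine h.extend g g1 (g2 ▸ hM1L) f' h1 (by rw [g2]; exact h2) h3 ?_
  intro a ha
  have h5 := h4 x (by rw [hn1]; exact hxu)
  rw [hg'x, Sym2.eq_swap] at h5
  rw [h5, hsum, hβ a ha]
  have := m7 (g a) (by rw [← g2]; exact Finset.mem_image_of_mem g ha)
  omega

/-- Broom step. -/
theorem Broom.step {H : SimpleGraph V} {x u : V} (h : Broom H x u) {b : V → ℕ} {L : Finset ℕ}
    (hNT : NT H b) (hL : H.edgeSet.ncard ≤ L.card) (β : ℕ)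
    (hβ : ∀ a ∈ (nb H x).erase u, b a = β)
    (IH : ∀ (H' : SimpleGraph V) (b' : V → ℕ) (L' : Finset ℕ),
      H'.edgeSet.ncard < H.edgeSet.ncard → NT H' b' → H'.edgeSet.ncard ≤ L'.card →
      Solv H' b' L') : Solv H b L := by
  have hcard := card_cut H x _ h.sub
  have hpos := Finset.card_pos.2 h.hne
  have hle := card_nb_le (cut H x ((nb H x).erase u)) u
  rw [h.nb_cut_u] at hle
  have hu2 := h.hu2
  have hfin := h.finish hNT hL β hβ IH
  by_cases hex : ∃ L1 ⊆ L, L1.card = ((nb H x).erase u).card ∧ b x + ∑ i ∈ L1, i = β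
  · obtain ⟨L1, hL1, hc1, hs⟩ := hex
    by_cases hz : (∀ z ∈ nb H u, z ≠ x → (nb H z).card = 1) ∧
        ∀ z ∈ nb H u, z ≠ x → b z = β
    · exact h.double hNT hL β hβ IH L1 hL1 hc1 hs hz.1 hz.2
    · apply hfin L1 hL1 hc1 (Or.inl hs)
      intro hall
      by_contra hcon
      push Not at hcon
      exact hz ⟨hall, fun z h1 h2 => by rw [← hcon z h1 h2, hs]⟩
  · push Not at hex
    obtain ⟨L1, hL1, hc1⟩ := Finset.exists_subset_card_eq
      (show ((nb H x).erase u).card ≤ L.card by omega)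
    by_cases hz : ∃ z ∈ nb H u, z ≠ x ∧ b x + ∑ i ∈ L1, i ≠ b z
    · exact hfin L1 hL1 hc1 (Or.inr fun M hM hMc => hex M hM (hMc.trans hc1)) (fun _ => hz)
    · push Not at hz
      obtain ⟨l, hl⟩ := Finset.card_pos.1 (show 0 < L1.card by omega)
      obtain ⟨l', hl'⟩ := Finset.card_pos.1 (show 0 < (L \ L1).card by
        rw [Finset.card_sdiff_of_subset hL1]; omega)
      rw [Finset.mem_sdiff] at hl'
      have hex2 := sum_exchange L1 l l' hl hl'.2
      obtain ⟨z, hz1⟩ := Finset.card_pos.1 (show 0 < ((nb H u).erase x).card by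
        rw [Finset.card_erase_of_mem (mem_nb_symm h.hu)]; omega)
      rw [Finset.mem_erase] at hz1
      have hne : l ≠ l' := by rintro rfl; exact hl'.2 hl
      have hcc : (insert l' (L1.erase l)).card = L1.card := by
        rw [Finset.card_insert_of_notMem (by simp [hl'.2]), Finset.card_erase_of_mem hl]
        have := Finset.card_pos.2 ⟨l, hl⟩
        omega
      refine hfin (insert l' (L1.erase l)) ?_ (hcc.trans hc1)
        (Or.inr fun M hM hMc => hex M hM (by omega)) (fun _ => ⟨z, hz1.2, hz1.1, ?_⟩)
      · intro i hi
        rw [Finset.mem_insert] at hi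
        rcases hi with rfl | hi
        · exact hl'.1
        · exact hL1 (Finset.mem_of_mem_erase hi)
      · have := hz z hz1.2 hz1.1
        rw [← this]
        omega

/-! ### The generic step -/

theorem swap_label (N : Finset V) (g : V → ℕ) (hg : Set.InjOn g N) (v w : V) (hv : v ∈ N)
    (hw : w ∈ N) : Set.InjOn (g ∘ Equiv.swap v w) N ∧
      N.image (g ∘ Equiv.swap v w) = N.image g := by
  have hm : ∀ a ∈ N, Equiv.swap v w a ∈ N := by
    intro a ha
    rw [Equiv.swap_apply_def]
    split_ifs <;> assumption
  constructor
  · intro a ha c hc heq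
    exact (Equiv.swap v w).injective (hg (hm a ha) (hm c hc) heq)
  · ext i
    simp only [Finset.mem_image, Function.comp]
    constructor
    · rintro ⟨a, ha, rfl⟩; exact ⟨_, hm a ha, rfl⟩
    · rintro ⟨a, ha, rfl⟩; exact ⟨_, hm a ha, by simp⟩

theorem nb_cut_all {H : SimpleGraph V} {u p : V} (hp : p ≠ u) :
    nb (cut H u (nb H u)) p = (nb H p).erase u := by
  by_cases h : p ∈ nb H u
  · exact nb_cut_mem _ _ _ (Finset.Subset.refl _) p h
  · rw [nb_cut_other _ _ _ p hp h, Finset.erase_eq_of_notMem]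
    intro h2
    exact h (mem_nb_symm h2)

theorem nb_cut_all_self {H : SimpleGraph V} {u : V} : nb (cut H u (nb H u)) u = ∅ := by
  rw [nb_cut_self _ _ _ (Finset.Subset.refl _)]; simp

theorem center_unique {K : SimpleGraph V} {x x' t : V}
    (h : ∀ y ∈ nb K x, (nb K y).card = 1) (h' : ∀ y ∈ nb K x', (nb K y).card = 1)
    (ht : t = x ∨ t ∈ nb K x) (ht' : t = x' ∨ t ∈ nb K x') :
    x = x' ∨ (nb K x = {x'} ∧ nb K x' = {x}) := by
  have key : x ∈ nb K x' → (nb K x = {x'} ∧ nb K x' = {x}) := fun hx =>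
    ⟨nb_card_one hx (h' x hx), nb_card_one (mem_nb_symm hx) (h x' (mem_nb_symm hx))⟩
  rcases ht with rfl | ht <;> rcases ht' with rfl | ht'
  · exact Or.inl rfl
  · exact Or.inr (key ht')
  · exact Or.inr (key (mem_nb_symm ht))
  · left
    have h1 := nb_card_one ht (h t ht)
    have h2 := nb_card_one ht' (h' t ht')
    rw [h1] at h2
    exact Finset.singleton_injective h2

/-- Swapping two labels in the closed star of a tied centre does not create new ties. -/
theorem NTat_swap {K : SimpleGraph V} {r r' : V → ℕ} {x x' v w : V}
    (hbad : ¬ NTat K r x) (hx' : NTat K r x')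
    (hv : v = x ∨ v ∈ nb K x) (hw : w = x ∨ w ∈ nb K x)
    (hr : ∀ p, p ≠ v → p ≠ w → r' p = r p) : NTat K r' x' := by
  intro hne' hl'
  have hx'' := hx' hne' hl'
  have hl : ∀ y ∈ nb K x, (nb K y).card = 1 := by
    by_contra hcon
    exact hbad (fun _ h => absurd h hcon)
  have hdis : ∀ t, (t = x ∨ t ∈ nb K x) → (t = x' ∨ t ∈ nb K x') → False := by
    intro t ht ht'
    rcases center_unique hl hl' ht ht' with rfl | ⟨h1, h2⟩
    · exact hbad hx'
    · apply hbad
      intro _ _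
      rw [h1]
      refine ⟨?_, by simp⟩
      intro _ y hy
      rw [Finset.mem_singleton] at hy
      subst hy
      have := hx''.1 (by rw [h2]; simp) x (by rw [h2]; simp)
      exact this.symm
  have heq : ∀ t, (t = x' ∨ t ∈ nb K x') → r' t = r t := fun t ht =>
    hr t (by rintro rfl; exact hdis _ hv ht) (by rintro rfl; exact hdis _ hw ht)
  refine ⟨fun hc y hy => ?_, fun hc => ?_⟩
  · rw [heq _ (Or.inl rfl), heq _ (Or.inr hy)]
    exact hx''.1 hc y hy
  · obtain ⟨y, hy, y', hy', hne⟩ := hx''.2 hc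
    exact ⟨y, hy, y', hy', by rwa [heq _ (Or.inr hy), heq _ (Or.inr hy')]⟩

theorem swap_exists (H : SimpleGraph V) (b : V → ℕ)
    (noStar : ∀ x, (nb H x).Nonempty → ∃ y ∈ nb H x, 2 ≤ (nb H y).card)
    (noBroom : ∀ x u, Broom H x u → ∃ a ∈ (nb H x).erase u, ∃ a' ∈ (nb H x).erase u, b a ≠ b a')
    (u : V) (g : V → ℕ) (hg : Set.InjOn g (nb H u)) (x : V)
    (hbad : ¬ NTat (cut H u (nb H u)) (red b u (nb H u) g) x) :
    ∃ v ∈ nb H u, ∃ w ∈ nb H u, v ≠ w ∧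
      (v = x ∨ v ∈ nb (cut H u (nb H u)) x) ∧ (w = x ∨ w ∈ nb (cut H u (nb H u)) x) ∧
      ∀ r' : V → ℕ, (r' v + g v = red b u (nb H u) g v + g w) →
        (r' w + g w = red b u (nb H u) g w + g v) →
        (∀ p, p ≠ v → p ≠ w → r' p = red b u (nb H u) g p) →
        NTat (cut H u (nb H u)) r' x := by
  set K := cut H u (nb H u) with hK
  set r := red b u (nb H u) g with hr
  have hne : (nb K x).Nonempty := by
    by_contra hcon
    exact hbad (fun h => absurd h hcon)
  have hl : ∀ y ∈ nb K x, (nb K y).card = 1 := by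
    by_contra hcon
    exact hbad (fun _ h => absurd h hcon)
  have hxu : x ≠ u := by
    rintro rfl
    rw [nb_cut_all_self] at hne
    simp at hne
  have hyu : ∀ y ∈ nb K x, y ≠ u := by
    rintro y hy rfl
    have := hl y hy
    rw [nb_cut_all_self] at this
    simp at this
  have hnx : nb K x = (nb H x).erase u := nb_cut_all hxu
  have hny : ∀ y ∈ nb K x, (nb H y).erase u = {x} := fun y hy => by
    rw [← nb_cut_all (hyu y hy)]; exact nb_card_one hy (hl y hy)
  have hnyN : ∀ y ∈ nb K x, y ∉ nb H u → nb H y = {x} := fun y hy hN => by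
    rw [← hny y hy, Finset.erase_eq_of_notMem]
    exact fun h => hN (mem_nb_symm h)
  have hnyN' : ∀ y ∈ nb K x, y ∈ nb H u → nb H y = {u, x} := fun y hy hN => by
    rw [← hny y hy, Finset.insert_erase (mem_nb_symm hN)]
  have hrN : ∀ y ∈ nb K x, y ∉ nb H u → r y = b y := fun y hy hN =>
    red_other _ _ _ _ _ (hyu y hy) hN
  have hxN : x ∉ nb H u → nb K x = nb H x := fun h => by
    rw [hnx, Finset.erase_eq_of_notMem]
    exact fun h' => h (mem_nb_symm h')
  have hnone : (∀ y ∈ nb K x, ∀ y' ∈ nb K x, r y = r y') → ∃ y ∈ nb K x, y ∈ nb H u := by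
    intro heq
    by_contra hcon
    push Not at hcon
    have hleaf : ∀ y ∈ nb K x, (nb H y).card = 1 := fun y hy => by
      rw [hnyN y hy (hcon y hy)]; simp
    by_cases hx : x ∈ nb H u
    · obtain ⟨y, hy, hy2⟩ := noStar x ⟨u, mem_nb_symm hx⟩
      have hyu' : y = u := by
        by_contra hne'
        have := hleaf y (by rw [hnx]; exact Finset.mem_erase.2 ⟨hne', hy⟩)
        omega
      subst hyu'
      obtain ⟨a, ha, a', ha', hab⟩ := noBroom x y
        ⟨hy, hy2, by rw [← hnx]; exact hne, by rw [← hnx]; exact hleaf⟩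
      rw [← hnx] at ha ha'
      have := heq a ha a' ha'
      rw [hrN a ha (hcon a ha), hrN a' ha' (hcon a' ha')] at this
      exact hab this
    · rw [hxN hx] at hleaf hne
      obtain ⟨y, hy, hy2⟩ := noStar x hne
      have := hleaf y hy
      omega
  by_cases hc1 : (nb K x).card = 1
  · obtain ⟨y, hy⟩ := Finset.card_eq_one.1 hc1
    have hymem : y ∈ nb K x := by rw [hy]; simp
    have hyx : y ≠ x := ((mem_nb _ _ _).1 hymem).ne'
    have hrxy : r x = r y := by
      by_contra hcon
      apply hbad
      intro _ _
      refine ⟨fun _ y' hy' => ?_, fun h => by omega⟩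
      rw [hy, Finset.mem_singleton] at hy'
      rw [hy']; exact hcon
    have hyN : y ∈ nb H u := by
      obtain ⟨y', hy', h⟩ := hnone (by
        intro a ha a' ha'
        rw [hy, Finset.mem_singleton] at ha ha'
        rw [ha, ha'])
      rw [hy, Finset.mem_singleton] at hy'
      rwa [← hy']
    have hxNu : x ∈ nb H u := by
      by_contra hx
      have hnx' : nb H x = {y} := by rw [← hxN hx, hy]
      have hny' := hnyN' y hymem hyN
      obtain ⟨t, ht, ht2⟩ := noStar y ⟨u, mem_nb_symm hyN⟩
      have htu : t = u := by
        rw [hny', Finset.mem_insert, Finset.mem_singleton] at ht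
        rcases ht with h | rfl
        · exact h
        · rw [hnx'] at ht2; simp at ht2
      subst htu
      have her : (nb H y).erase t = {x} := hny y hymem
      obtain ⟨a, ha, a', ha', hab⟩ := noBroom y t ⟨ht, ht2, by rw [her]; simp, by
        rw [her]; intro a ha
        rw [Finset.mem_singleton] at ha
        rw [ha, hnx']; simp⟩
      rw [her, Finset.mem_singleton] at ha ha'
      exact hab (by rw [ha, ha'])
    refine ⟨x, hxNu, y, hyN, hyx.symm, Or.inl rfl, Or.inr hymem, ?_⟩
    intro r' h1 h2 _ _ _
    refine ⟨fun _ y' hy' => ?_, fun h => by omega⟩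
    rw [hy, Finset.mem_singleton] at hy'
    rw [hy']
    have : g x ≠ g y := fun h => hyx (hg hxNu hyN h).symm
    omega
  · have hc2 : 2 ≤ (nb K x).card := by
      have := Finset.card_pos.2 hne
      omega
    have heq : ∀ y ∈ nb K x, ∀ y' ∈ nb K x, r y = r y' := by
      by_contra hcon
      push Not at hcon
      exact hbad (fun _ _ => ⟨fun h => absurd h hc1, fun _ => hcon⟩)
    obtain ⟨y1, hy1, hy1N⟩ := hnone heq
    by_cases h2 : ∃ y2 ∈ nb K x, y2 ≠ y1 ∧ y2 ∈ nb H u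
    · obtain ⟨y2, hy2, hy21, hy2N⟩ := h2
      refine ⟨y1, hy1N, y2, hy2N, hy21.symm, Or.inr hy1, Or.inr hy2, ?_⟩
      intro r' h1 h2 _ _ _
      refine ⟨fun h => absurd h hc1, fun _ => ⟨y1, hy1, y2, hy2, ?_⟩⟩
      have : g y1 ≠ g y2 := fun h => hy21 (hg hy1N hy2N h).symm
      have := heq y1 hy1 y2 hy2
      omega
    · push Not at h2
      have hy1x : y1 ≠ x := ((mem_nb _ _ _).1 hy1).ne'
      obtain ⟨y2, hy2⟩ := Finset.card_pos.1 (show 0 < ((nb K x).erase y1).card by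
        rw [Finset.card_erase_of_mem hy1]; omega)
      have hy2' := Finset.mem_erase.1 hy2
      have hxNu : x ∈ nb H u := by
        by_contra hx
        have hnx' := hxN hx
        have hcy : (nb H y1).card = 2 := by
          rw [hnyN' y1 hy1 hy1N, Finset.card_pair hxu.symm]
        have hB : Broom H x y1 := ⟨hnx' ▸ hy1, by omega, hnx' ▸ ⟨y2, hy2⟩, by
          rw [← hnx']
          intro a ha
          have ha' := Finset.mem_erase.1 ha
          rw [hnyN a ha'.2 (h2 a ha'.2 ha'.1)]; simp⟩
        obtain ⟨a, ha, a', ha', hab⟩ := noBroom x y1 hB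
        rw [← hnx', Finset.mem_erase] at ha ha'
        have := heq a ha.2 a' ha'.2
        rw [hrN a ha.2 (h2 a ha.2 ha.1), hrN a' ha'.2 (h2 a' ha'.2 ha'.1)] at this
        exact hab this
      refine ⟨x, hxNu, y1, hy1N, hy1x.symm, Or.inl rfl, Or.inr hy1, ?_⟩
      intro r' h3 h4 h5 _ _
      refine ⟨fun h => absurd h hc1, fun _ => ⟨y1, hy1, y2, hy2'.2, ?_⟩⟩
      have hy2x : y2 ≠ x := ((mem_nb _ _ _).1 hy2'.2).ne'
      rw [h5 y2 hy2x hy2'.1]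
      have : g x ≠ g y1 := fun h => hy1x (hg hxNu hy1N h).symm
      have := heq y1 hy1 y2 hy2'.2
      omega

theorem good_labels (H : SimpleGraph V) (b : V → ℕ)
    (noStar : ∀ x, (nb H x).Nonempty → ∃ y ∈ nb H x, 2 ≤ (nb H y).card)
    (noBroom : ∀ x u, Broom H x u → ∃ a ∈ (nb H x).erase u, ∃ a' ∈ (nb H x).erase u, b a ≠ b a')
    (u : V) (hu : (nb H u).Nonempty) (B : Finset ℕ) (hB : (nb H u).card = B.card) (m : ℕ)
    (hm : m ∈ B) :
    ∃ g : V → ℕ, Set.InjOn g (nb H u) ∧ (nb H u).image g = B ∧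
      (∀ z ∈ nb H u, g z = m → 2 ≤ (nb H z).card) ∧
      NT (cut H u (nb H u)) (red b u (nb H u) g) := by
  classical
  obtain ⟨g, ⟨g1, g2, g3⟩, hmin⟩ := exists_min_nat
    (fun g : V → ℕ => Set.InjOn g (nb H u) ∧ (nb H u).image g = B ∧
      (∀ z ∈ nb H u, g z = m → 2 ≤ (nb H z).card))
    (fun g => (Finset.univ.filter
      (fun x => ¬ NTat (cut H u (nb H u)) (red b u (nb H u) g) x)).card) (by
      obtain ⟨g, g1, g2⟩ := plain_bij _ B hB
      obtain ⟨z, hz, hz2⟩ := noStar u hu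
      rw [← g2, Finset.mem_image] at hm
      obtain ⟨t, ht, htm⟩ := hm
      obtain ⟨s1, s2⟩ := swap_label _ g g1 z t hz ht
      refine ⟨g ∘ Equiv.swap z t, s1, s2.trans g2, ?_⟩
      intro y hy hym
      have h1 : (g ∘ Equiv.swap z t) z = m := by simp [htm]
      rw [s1 hy hz (hym.trans h1.symm)]
      exact hz2)
  refine ⟨g, g1, g2, g3, ?_⟩
  by_contra hcon
  have hcon' : ∃ x, ¬ NTat (cut H u (nb H u)) (red b u (nb H u) g) x := by
    by_contra h
    push Not at h
    exact hcon h
  obtain ⟨x, hbad⟩ := hcon'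
  obtain ⟨v, hv, w, hw, hvw, hvx, hwx, hfix⟩ := swap_exists H b noStar noBroom u g g1 x hbad
  have huN := not_mem_of_sub (Finset.Subset.refl (nb H u))
  have hvu : v ≠ u := by rintro rfl; exact huN hv
  have hwu : w ≠ u := by rintro rfl; exact huN hw
  have hdeg : ∀ t ∈ nb H u, (t = x ∨ t ∈ nb (cut H u (nb H u)) x) → 2 ≤ (nb H t).card := by
    intro t ht htx
    have hne : (nb (cut H u (nb H u)) x).Nonempty := by
      by_contra hcon
      exact hbad (fun h => absurd h hcon)
    have htu : t ≠ u := by rintro rfl; exact huN ht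
    have h1 : 0 < (nb (cut H u (nb H u)) t).card := by
      rcases htx with rfl | h
      · exact Finset.card_pos.2 hne
      · exact Finset.card_pos.2 ⟨x, mem_nb_symm h⟩
    rw [nb_cut_all htu, Finset.card_erase_of_mem (mem_nb_symm ht)] at h1
    omega
  obtain ⟨s1, s2⟩ := swap_label _ g g1 v w hv hw
  have hsumeq : ∑ a ∈ nb H u, (g ∘ Equiv.swap v w) a = ∑ a ∈ nb H u, g a := by
    rw [← Finset.sum_image (f := fun i => i) s1, s2, Finset.sum_image (f := fun i => i) g1]
  have ho : ∀ p, p ≠ v → p ≠ w →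
      red b u (nb H u) (g ∘ Equiv.swap v w) p = red b u (nb H u) g p := by
    intro p hp hq
    unfold red
    rw [hsumeq, Function.comp, Equiv.swap_apply_of_ne_of_ne hp hq]
  have hlt := hmin (g ∘ Equiv.swap v w) ⟨s1, s2.trans g2, by
    intro z hz hzm
    by_cases hzv : z = v
    · rw [hzv]; exact hdeg v hv hvx
    by_cases hzw : z = w
    · rw [hzw]; exact hdeg w hw hwx
    rw [Function.comp, Equiv.swap_apply_of_ne_of_ne hzv hzw] at hzm
    exact g3 z hz hzm⟩
  revert hlt
  rw [imp_false, not_le]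
  apply Finset.card_lt_card
  rw [Finset.ssubset_iff_of_subset]
  · refine ⟨x, by simpa using hbad, ?_⟩
    simp only [Finset.mem_filter, Finset.mem_univ, true_and, not_not]
    apply hfix _ _ _ ho
    · rw [red_mem _ _ _ _ _ huN hv, red_mem _ _ _ _ _ huN hv]
      simp [Function.comp]; omega
    · rw [red_mem _ _ _ _ _ huN hw, red_mem _ _ _ _ _ huN hw]
      simp [Function.comp]; omega
  · intro x' hx'
    simp only [Finset.mem_filter, Finset.mem_univ, true_and] at hx' ⊢
    intro h
    exact hx' (NTat_swap hbad h hvx hwx ho)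

/-- Largest sum of `k` labels. -/
def tau (L : Finset ℕ) (k : ℕ) : ℕ := (L.powersetCard k).sup (fun s => ∑ i ∈ s, i)

theorem le_tau {L s : Finset ℕ} (hs : s ⊆ L) : ∑ i ∈ s, i ≤ tau L s.card :=
  Finset.le_sup (f := fun s : Finset ℕ => ∑ i ∈ s, i) (Finset.mem_powersetCard.2 ⟨hs, rfl⟩)

theorem exists_tau {L : Finset ℕ} {k : ℕ} (hk : k ≤ L.card) :
    ∃ B ⊆ L, B.card = k ∧ ∑ i ∈ B, i = tau L k := by
  obtain ⟨B, hB, h⟩ := Finset.exists_mem_eq_sup (L.powersetCard k)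
    (Finset.powersetCard_nonempty.2 hk) (fun s : Finset ℕ => ∑ i ∈ s, i)
  rw [Finset.mem_powersetCard] at hB
  exact ⟨B, hB.1, hB.2, h.symm⟩

theorem lt_tau {L s : Finset ℕ} (hs : s ⊆ L) {a a' : ℕ} (ha' : a' ∈ s) (ha : a ∈ L)
    (has : a ∉ s) (hlt : a' < a) : ∑ i ∈ s, i < tau L s.card := by
  obtain ⟨h1, h2⟩ := sum_exchange s a' a ha' has
  have h3 := le_tau (L := L) (s := insert a (s.erase a')) (by
    intro i hi
    rcases Finset.mem_insert.1 hi with rfl | hi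
    · exact ha
    · exact hs (Finset.mem_of_mem_erase hi))
  rw [h1] at h3
  omega

theorem generic_step (H : SimpleGraph V) (b : V → ℕ) (L : Finset ℕ)
    (hL : H.edgeSet.ncard ≤ L.card) (hex : ∃ x, (nb H x).Nonempty)
    (noStar : ∀ x, (nb H x).Nonempty → ∃ y ∈ nb H x, 2 ≤ (nb H y).card)
    (noBroom : ∀ x u, Broom H x u → ∃ a ∈ (nb H x).erase u, ∃ a' ∈ (nb H x).erase u, b a ≠ b a')
    (IH : ∀ (H' : SimpleGraph V) (b' : V → ℕ) (L' : Finset ℕ),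
      H'.edgeSet.ncard < H.edgeSet.ncard → NT H' b' → H'.edgeSet.ncard ≤ L'.card →
      Solv H' b' L') : Solv H b L := by
  classical
  obtain ⟨u, hu, hmax⟩ := Finset.exists_max_image
    (Finset.univ.filter (fun x => (nb H x).Nonempty))
    (fun v => toLex (b v + tau L (nb H v).card, (nb H v).card)) (by
      obtain ⟨x, hx⟩ := hex
      exact ⟨x, by simpa using hx⟩)
  simp only [Finset.mem_filter, Finset.mem_univ, true_and] at hu hmax
  have hcard := card_cut H u _ (Finset.Subset.refl _)
  have hpos := Finset.card_pos.2 hu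
  obtain ⟨B, hBL, hBc, hBs⟩ := exists_tau (L := L) (k := (nb H u).card) (by omega)
  have hBtop : ∀ i ∈ B, ∀ j ∈ L, j ∉ B → j < i := by
    intro i hi j hj hjB
    by_contra hcon
    have hne : i ≠ j := by rintro rfl; exact hjB hi
    have := lt_tau hBL hi hj hjB (by omega)
    rw [hBc] at this
    omega
  have hBne : B.Nonempty := Finset.card_pos.1 (by omega)
  obtain ⟨g, g1, g2, g3, g4⟩ := good_labels H b noStar noBroom u hu B hBc.symm (B.max' hBne)
    (B.max'_mem hBne)
  have huN := not_mem_of_sub (Finset.Subset.refl (nb H u))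
  obtain ⟨f', h1, h2, h3⟩ := IH (cut H u (nb H u)) (red b u (nb H u) g) (L \ B) (by omega) g4
    (by rw [Finset.card_sdiff_of_subset hBL]; omega)
  obtain ⟨f, i1, i2, i3, i4, i5⟩ := extend_cut H b L u _ (Finset.Subset.refl _) g g1
    (g2 ▸ hBL) f' h1 (by rw [g2]; exact h2)
  have hsum : ∑ a ∈ nb H u, g a = ∑ i ∈ B, i := by
    rw [← g2, Finset.sum_image g1]
  have hc : ∀ z ∈ nb H u, b z + wt H f z < b u + wt H f u := by
    intro z hz
    have htu : b u + wt H f u = b u + tau L (nb H u).card := by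
      rw [i3, wt_empty _ nb_cut_all_self, red_self _ _ _ _ huN, hsum, hBs]; rfl
    rw [htu]
    have hzu := mem_nb_symm hz
    have hzne : z ≠ u := by rintro rfl; exact huN hz
    have hgB : ∀ z ∈ nb H u, g z ∈ B := fun z hz => by
      rw [← g2]; exact Finset.mem_image_of_mem g hz
    have hle := hmax z ⟨u, hzu⟩
    rw [Prod.Lex.toLex_le_toLex] at hle
    have hedge : ∀ w ∈ nb H z, s(z, w) ∈ H.edgeSet := fun w hw => (mem_nb _ _ _).1 hw
    have hinj : Set.InjOn (fun w => f s(z, w)) (nb H z) := by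
      intro w hw w' hw' heq
      exact Sym2.congr_right.1 (i1 (hedge w hw) (hedge w' hw') heq)
    obtain ⟨s, hs⟩ : ∃ s, s = (nb H z).image (fun w => f s(z, w)) := ⟨_, rfl⟩
    have hss : wt H f z = ∑ i ∈ s, i := by
      rw [hs, Finset.sum_image hinj]; rfl
    have hsc : s.card = (nb H z).card := by
      rw [hs, Finset.card_image_of_injOn hinj]
    have hsL : s ⊆ L := by
      intro i hi
      rw [hs, Finset.mem_image] at hi
      obtain ⟨w, hw, rfl⟩ := hi
      exact i2 (hedge w hw)
    have hfu : f s(z, u) = g z := by rw [Sym2.eq_swap]; exact i4 z hz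
    have hfo : ∀ w ∈ nb H z, w ≠ u → f s(z, w) ∈ L \ B := by
      intro w hw hwu
      have he : s(z, w) ∈ (cut H u (nb H u)).edgeSet := by
        rw [SimpleGraph.mem_edgeSet, ← mem_nb, nb_cut_all hzne]
        exact Finset.mem_erase.2 ⟨hwu, hw⟩
      rw [i5 _ he]
      exact h2 he
    have hsB : ∀ i ∈ s, i ∈ B → i = g z := by
      intro i hi hiB
      rw [hs, Finset.mem_image] at hi
      obtain ⟨w, hw, rfl⟩ := hi
      by_cases hwu : w = u
      · subst hwu; exact hfu
      · exact absurd hiB (Finset.mem_sdiff.1 (hfo w hw hwu)).2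
    have hgs : g z ∈ s := by
      rw [hs, Finset.mem_image]; exact ⟨u, hzu, hfu⟩
    have hles := le_tau hsL
    rw [hsc] at hles
    rw [hss]
    have hTle : b z + tau L (nb H z).card ≤ b u + tau L (nb H u).card := by
      rcases hle with h | h
      · exact h.le
      · exact h.1.le
    by_cases hd : (nb H u).card = 1
    · obtain ⟨y, hy, hy2⟩ := noStar u hu
      obtain ⟨z', hz'⟩ := Finset.card_eq_one.1 hd
      have hyz : y = z := by
        rw [hz', Finset.mem_singleton] at hy hz
        rw [hy, hz]
      subst hyz
      rcases hle with h | h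
      · have h' : b y + tau L (nb H y).card < b u + tau L (nb H u).card := h
        omega
      · have h' : (nb H y).card ≤ (nb H u).card := h.2
        omega
    · suffices hlt : ∑ i ∈ s, i < tau L s.card by
        rw [hsc] at hlt; omega
      by_cases hdz : 2 ≤ (nb H z).card
      · obtain ⟨w, hw⟩ := Finset.card_pos.1 (show 0 < ((nb H z).erase u).card by
          rw [Finset.card_erase_of_mem hzu]; omega)
        rw [Finset.mem_erase] at hw
        obtain ⟨a, ha⟩ := Finset.card_pos.1 (show 0 < (B.erase (g z)).card by
          rw [Finset.card_erase_of_mem (hgB z hz)]; omega)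
        rw [Finset.mem_erase] at ha
        have hfw := Finset.mem_sdiff.1 (hfo w hw.2 hw.1)
        refine lt_tau hsL (a := a) (a' := f s(z, w)) ?_ (hBL ha.2) ?_ ?_
        · rw [hs, Finset.mem_image]; exact ⟨w, hw.2, rfl⟩
        · exact fun h => ha.1 (hsB a h ha.2)
        · exact hBtop a ha.2 _ hfw.1 hfw.2
      · have hne : g z ≠ B.max' hBne := fun h => hdz (g3 z hz h)
        refine lt_tau hsL hgs (hBL (B.max'_mem hBne)) ?_ ?_
        · exact fun h => hne (hsB _ h (B.max'_mem hBne)).symm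
        · exact lt_of_le_of_ne (B.le_max' _ (hgB z hz)) hne
  refine ⟨f, i1, i2, ?_⟩
  intro p q hpq
  by_cases hp : p = u
  · subst hp; exact (hc q ((mem_nb _ _ _).2 hpq)).ne'
  by_cases hq : q = u
  · subst hq; exact (hc p ((mem_nb _ _ _).2 hpq.symm)).ne
  rw [i3, i3]
  apply h3
  rw [cut_adj]
  tauto

/-- Weighted existence theorem. -/
theorem solv_main (n : ℕ) : ∀ (H : SimpleGraph V) (b : V → ℕ) (L : Finset ℕ),
    H.edgeSet.ncard = n → NT H b → H.edgeSet.ncard ≤ L.card → Solv H b L := by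
  induction n using Nat.strong_induction_on with
  | _ n ih =>
    intro H b L hn hNT hL
    have IH : ∀ (H' : SimpleGraph V) (b' : V → ℕ) (L' : Finset ℕ),
      H'.edgeSet.ncard < H.edgeSet.ncard → NT H' b' → H'.edgeSet.ncard ≤ L'.card →
      Solv H' b' L' := fun H' b' L' h => ih _ (hn ▸ h) H' b' L' rfl
    by_cases hex : ∃ x, (nb H x).Nonempty
    · by_cases hstar : ∃ x, (nb H x).Nonempty ∧ ∀ y ∈ nb H x, (nb H y).card = 1
      · obtain ⟨x, h1, h2⟩ := hstar
        exact star_step H b L hNT hL x h1 h2 IH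
      push Not at hstar
      by_cases hbroom : ∃ x u, Broom H x u ∧
          ∀ a ∈ (nb H x).erase u, ∀ a' ∈ (nb H x).erase u, b a = b a'
      · obtain ⟨x, u, h1, h2⟩ := hbroom
        obtain ⟨a, ha⟩ := h1.hne
        exact h1.step hNT hL (b a) (fun a' ha' => h2 a' ha' a ha) IH
      push Not at hbroom
      refine generic_step H b L hL hex ?_ hbroom IH
      intro x hx
      obtain ⟨y, hy, hy1⟩ := hstar x hx
      refine ⟨y, hy, ?_⟩
      have := Finset.card_pos.2 ⟨x, mem_nb_symm hy⟩
      omega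
    · push Not at hex
      have hno : ∀ p q, ¬ H.Adj p q := fun p q h => by
        have := (mem_nb H p q).2 h
        rw [hex p] at this
        simp at this
      have he : H.edgeSet = ∅ := by
        ext e
        induction e using Sym2.ind with
        | _ p q => simpa using hno p q
      refine ⟨fun _ => 0, ?_, ?_, fun p q h => absurd h (hno p q)⟩
      · rw [he]; exact Set.injOn_empty _
      · rw [he]; exact Set.mapsTo_empty _ _

end Weighted

/-! ### The local antimagic chromatic number -/

theorem vertexSum_eq_wt {V : Type*} [Fintype V] (G : SimpleGraph V) (f : Sym2 V → ℕ) (v : V) :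
    vertexSum G f v = wt G f v := by
  classical
  have h : G.incidenceSet v = (((nb G v).image (fun w => s(v, w)) : Finset (Sym2 V)) : Set _) := by
    ext e
    simp only [Finset.coe_image, Set.mem_image, Finset.mem_coe, mem_nb]
    constructor
    · rintro ⟨he, hv⟩
      obtain ⟨w, rfl⟩ := Sym2.mem_iff_exists.1 hv
      exact ⟨w, he, rfl⟩
    · rintro ⟨w, hw, rfl⟩
      exact ⟨hw, Sym2.mem_mk_left v w⟩
  unfold vertexSum wt
  rw [h, finsum_mem_coe_finset, Finset.sum_image]
  intro a _ c _ hac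
  exact Sym2.congr_right.1 hac

theorem card_nb_eq {V : Type*} [Fintype V] (G : SimpleGraph V) (v : V) :
    (G.neighborSet v).ncard = (nb G v).card := by
  rw [← Set.ncard_coe_finset]
  congr 1
  ext w
  simp [mem_nb]

/-- If all neighbours of `x` are leaves then a connected graph is a star. -/
theorem star_cover {V : Type*} [Fintype V] {G : SimpleGraph V} (hG : G.Connected) {x : V}
    (hl : ∀ y ∈ nb G x, (nb G y).card = 1) (v : V) : v = x ∨ v ∈ nb G x := by
  classical
  have hreach : G.Reachable x v := hG.preconnected x v
  rw [SimpleGraph.reachable_iff_reflTransGen] at hreach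
  induction hreach with
  | refl => exact Or.inl rfl
  | tail _ hab ih =>
    rcases ih with rfl | ih
    · exact Or.inr ((mem_nb _ _ _).2 hab)
    · have h1 := nb_card_one ih (hl _ ih)
      have h2 := (mem_nb _ _ _).2 hab
      rw [h1, Finset.mem_singleton] at h2
      exact Or.inl h2

/-- An edge with two pendant ends forces two vertices. -/
theorem not_both_pendant {V : Type*} [Fintype V] {G : SimpleGraph V} (hG : G.Connected)
    (hK2 : Fintype.card V ≠ 2) {x y : V} (hxy : y ∈ nb G x) (hx : (nb G x).card = 1)
    (hy : (nb G y).card = 1) : False := by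
  classical
  have h1 : nb G x = {y} := nb_card_one (mem_nb_symm hxy) hx
  have hl : ∀ z ∈ nb G x, (nb G z).card = 1 := by
    intro z hz
    rw [h1, Finset.mem_singleton] at hz
    rwa [hz]
  have hc := star_cover hG hl
  have hne : x ≠ y := ((mem_nb _ _ _).1 hxy).ne
  apply hK2
  rw [← Finset.card_univ, ← Finset.card_pair hne]
  congr 1
  ext v
  have := hc v
  rw [h1, Finset.mem_singleton] at this
  simpa using this

theorem exists_antimagic {V : Type*} [Fintype V] (G : SimpleGraph V) (hG : G.Connected)
    (hK2 : Fintype.card V ≠ 2) : ∃ f, IsLocalAntimagic G f := by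
  classical
  have key : Solv G (fun _ => 0) (Finset.Icc 1 G.edgeSet.ncard) := by
    have hLc : (Finset.Icc 1 G.edgeSet.ncard).card = G.edgeSet.ncard := by simp
    by_cases hNT : NT G (fun _ => 0)
    · exact solv_main _ G _ _ rfl hNT hLc.ge
    · have hNT' : ∃ x, ¬ NTat G (fun _ => 0) x := by
        by_contra h
        push Not at h
        exact hNT h
      obtain ⟨x, hbad⟩ := hNT'
      have hne : (nb G x).Nonempty := by
        by_contra hcon
        exact hbad (fun h => absurd h hcon)
      have hl : ∀ y ∈ nb G x, (nb G y).card = 1 := by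
        by_contra hcon
        exact hbad (fun _ h => absurd h hcon)
      have hc2 : 2 ≤ (nb G x).card := by
        have := Finset.card_pos.2 hne
        by_contra hcon
        obtain ⟨y, hy⟩ := hne
        exact not_both_pendant hG hK2 hy (by omega) (hl y hy)
      obtain ⟨K, hK, hKc⟩ := Finset.exists_subset_card_eq
        (show (nb G x).card ≤ (Finset.Icc 1 G.edgeSet.ncard).card by
          rw [hLc]; exact card_nb_le G x)
      obtain ⟨g, g1, g2⟩ := plain_bij _ K hKc.symm
      have hgpos : ∀ a ∈ nb G x, 1 ≤ g a := fun a ha =>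
        (Finset.mem_Icc.1 (hK (by rw [← g2]; exact Finset.mem_image_of_mem g ha))).1
      refine star_remove G _ _ x hl g g1 (by rw [g2]; exact hK) ?_ ?_
      · intro a ha
        obtain ⟨c, hc⟩ := Finset.card_pos.1 (show 0 < ((nb G x).erase a).card by
          rw [Finset.card_erase_of_mem ha]; omega)
        have h1 := Finset.add_sum_erase (nb G x) g ha
        have h2 := Finset.single_le_sum (f := g) (fun _ _ => Nat.zero_le _) hc
        have h3 := hgpos c (Finset.mem_of_mem_erase hc)
        omega
      · have hemp : ∀ v, nb (cut G x (nb G x)) v = ∅ := by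
          intro v
          rcases star_cover hG hl v with rfl | hv
          · exact nb_cut_all_self
          · rw [nb_cut_mem _ _ _ (Finset.Subset.refl _) v hv, nb_card_one hv (hl v hv)]; simp
        apply solv_main _ _ _ _ rfl
        · exact fun v => NTat_empty (hemp v)
        · have := card_cut G x _ (Finset.Subset.refl _)
          rw [g2, Finset.card_sdiff_of_subset hK, hLc, hKc]
          omega
  obtain ⟨f, h1, h2, h3⟩ := key
  refine ⟨f, ⟨?_, h1, ?_⟩, ?_⟩
  · simpa using h2
  · have hsub : f '' G.edgeSet ⊆ Set.Icc 1 G.edgeSet.ncard := by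
      simpa using h2.image_subset
    have : f '' G.edgeSet = Set.Icc 1 G.edgeSet.ncard := by
      apply Set.eq_of_subset_of_ncard_le hsub
      rw [Set.ncard_image_of_injOn h1, ← Finset.coe_Icc, Set.ncard_coe_finset]
      simp
    exact this.ge
  · intro u v huv
    rw [vertexSum_eq_wt, vertexSum_eq_wt]
    simpa using h3 u v huv

theorem colorCount_ge {V : Type*} [Fintype V] (G : SimpleGraph V) (hG : G.Connected)
    (hK2 : Fintype.card V ≠ 2) (f : Sym2 V → ℕ) (hf : IsLocalAntimagic G f) :
    {v : V | (G.neighborSet v).ncard = 1}.ncard + 1 ≤ colorCount G f := by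
  classical
  obtain ⟨⟨hmap, hinj, hsurj⟩, -⟩ := hf
  have hpend : ∀ v, (nb G v).card = 1 → ∃ w ∈ nb G v, nb G v = {w} ∧
      vertexSum G f v = f s(v, w) := by
    intro v hv
    obtain ⟨w, hw⟩ := Finset.card_eq_one.1 hv
    refine ⟨w, by simp [hw], hw, ?_⟩
    rw [vertexSum_eq_wt]
    simp [wt, hw]
  have hedge : ∀ v w, w ∈ nb G v → s(v, w) ∈ G.edgeSet := fun v w h => (mem_nb _ _ _).1 h
  have hPinj : Set.InjOn (vertexSum G f) {v : V | (G.neighborSet v).ncard = 1} := by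
    intro v hv v' hv' heq
    simp only [Set.mem_setOf_eq, card_nb_eq] at hv hv'
    obtain ⟨w, hw, hw1, hw2⟩ := hpend v hv
    obtain ⟨w', hw', hw1', hw2'⟩ := hpend v' hv'
    rw [hw2, hw2'] at heq
    have := hinj (hedge v w hw) (hedge v' w' hw') heq
    rcases Sym2.eq_iff.1 this with h | h
    · exact h.1
    · exfalso
      rw [h.2] at hw
      exact not_both_pendant hG hK2 hw hv hv'
  have hPle : ∀ v ∈ {v : V | (G.neighborSet v).ncard = 1},
      vertexSum G f v ≤ G.edgeSet.ncard := by
    intro v hv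
    simp only [Set.mem_setOf_eq, card_nb_eq] at hv
    obtain ⟨w, hw, hw1, hw2⟩ := hpend v hv
    rw [hw2]
    exact (hmap (hedge v w hw)).2
  have hnew : ∃ u, vertexSum G f u ∉ vertexSum G f '' {v : V | (G.neighborSet v).ncard = 1} := by
    by_cases hm : G.edgeSet.ncard = 0
    · obtain ⟨u⟩ := hG.nonempty
      refine ⟨u, ?_⟩
      rintro ⟨v, hv, -⟩
      simp only [Set.mem_setOf_eq, card_nb_eq] at hv
      have := card_nb_le G v
      omega
    · obtain ⟨e, he, hfe⟩ := hsurj (show G.edgeSet.ncard ∈ Set.Icc 1 G.edgeSet.ncard from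
        ⟨by omega, le_rfl⟩)
      have hone : ∃ p q, q ∈ nb G p ∧ f s(p, q) = G.edgeSet.ncard ∧ (nb G p).card ≠ 1 := by
        induction e using Sym2.ind with
        | _ p q =>
          have hq : q ∈ nb G p := (mem_nb _ _ _).2 he
          by_cases hp : (nb G p).card = 1
          · refine ⟨q, p, mem_nb_symm hq, by rw [Sym2.eq_swap]; exact hfe, ?_⟩
            exact fun h => not_both_pendant hG hK2 hq hp h
          · exact ⟨p, q, hq, hfe, hp⟩
      obtain ⟨p, q, hq, hfe, hp⟩ := hone
      refine ⟨p, ?_⟩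
      rintro ⟨v, hv, heq⟩
      have hle := hPle v hv
      have hpos := Finset.card_pos.2 ⟨q, hq⟩
      obtain ⟨c, hc⟩ := Finset.card_pos.1 (show 0 < ((nb G p).erase q).card by
        rw [Finset.card_erase_of_mem hq]; omega)
      have h1 := Finset.add_sum_erase (nb G p) (fun w => f s(p, w)) hq
      have h2 := Finset.single_le_sum (f := fun w => f s(p, w)) (fun _ _ => Nat.zero_le _) hc
      have h3 := (hmap (hedge p c (Finset.mem_of_mem_erase hc))).1
      have h4 := vertexSum_eq_wt G f p
      unfold wt at h4
      omega
  obtain ⟨u, hu⟩ := hnew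
  unfold colorCount
  rw [← Set.ncard_image_of_injOn hPinj, ← Set.ncard_insert_of_notMem hu (Set.toFinite _)]
  apply Set.ncard_le_ncard _ (Set.toFinite _)
  rintro _ (rfl | ⟨v, -, rfl⟩) <;> exact ⟨_, rfl⟩

theorem chiLA_ge_pendants {V : Type*} [Fintype V] (G : SimpleGraph V) (hG : G.Connected)
    (hK2 : Fintype.card V ≠ 2) (k : ℕ)
    (hk : {v : V | (G.neighborSet v).ncard = 1}.ncard = k) :
    k + 1 ≤ chiLA G := by
  obtain ⟨f0, hf0⟩ := exists_antimagic G hG hK2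
  unfold chiLA
  apply le_csInf
  · exact ⟨_, f0, hf0, rfl⟩
  · rintro n ⟨f, hf, rfl⟩
    rw [← hk]
    exact colorCount_ge G hG hK2 f hf
end

section
/- For integers p, q ≥ 3 with p ≢ q (mod 2), χ_la(K_{p,q}) = 3. -/
open scoped BigOperators

/-- Signed array of half-differences: used to build the labeling. -/
def GoodArr (p m : ℕ) : Prop :=
  ∃ (X : ℕ → ℕ → ℕ) (S : ℕ → ℕ → ℤ),
    (∀ r i, r < p → i < m → 1 ≤ X r i ∧ X r i ≤ p * m) ∧
    (∀ r i r' i', r < p → i < m → r' < p → i' < m → X r i = X r' i' → r = r' ∧ i = i') ∧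
    (∀ r i, S r i = 1 ∨ S r i = -1) ∧
    (∀ i, i < m → ∑ r ∈ Finset.range p, S r i * (2 * (X r i : ℤ) - 1) = (p : ℤ) - 2)

lemma goodArr_base (m : ℕ) : GoodArr 3 m := by
  refine ⟨fun r i => if r = 0 then i + 1 else
      if i % 2 = 0 then
        (if r = 1 then m + (m + 1) / 2 - i / 2 else m + (m + 1) / 2 + 1 + i / 2)
      else
        (if r = 1 then m + 2 * ((m + 1) / 2) + m / 2 - i / 2
          else m + 2 * ((m + 1) / 2) + m / 2 + 1 + i / 2),
    fun r i => if i % 2 = 0 then (if r = 2 then 1 else -1) else (if r = 2 then -1 else 1),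
    ?_, ?_, ?_, ?_⟩
  · intro r i hr hi
    interval_cases r <;> simp <;> (try split_ifs) <;> omega
  · intro r i r' i' hr hi hr' hi' h
    interval_cases r <;> interval_cases r' <;> simp at h <;> (try split_ifs at h) <;> simp <;> omega
  · intro r i
    dsimp only
    split_ifs <;> simp
  · intro i hi
    rw [Finset.sum_range_succ, Finset.sum_range_succ, Finset.sum_range_one]
    simp
    split_ifs <;> omega

lemma goodArr_step (p m : ℕ) (h : GoodArr p m) : GoodArr (p + 2) m := by
  obtain ⟨X, S, h1, h2, h3, h4⟩ := h
  have e : (p + 2) * m = p * m + 2 * m := by ring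
  refine ⟨fun r i => if r < p then X r i else if r = p then p * m + 2 * i + 1 else p * m + 2 * i + 2,
    fun r i => if r < p then S r i else if r = p then -1 else 1, ?_, ?_, ?_, ?_⟩
  · intro r i hr hi
    have := h1 r i
    dsimp only
    rw [e]
    split_ifs with ha hb
    · have := this ha hi; omega
    · omega
    · omega
  · intro r i r' i' hr hi hr' hi' h
    have a1 := h1 r i
    have a2 := h1 r' i'
    dsimp only at h
    by_cases ha : r < p <;> by_cases hb : r' < p
    · simp only [ha, hb, if_true] at h
      exact h2 _ _ _ _ ha hi hb hi' h
    · have := a1 ha hi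
      simp only [ha, hb, if_true, if_false] at h
      split_ifs at h <;> omega
    · have := a2 hb hi'
      simp only [ha, hb, if_true, if_false] at h
      split_ifs at h <;> omega
    · simp only [ha, hb, if_false] at h
      split_ifs at h <;> omega
  · intro r i
    dsimp only
    have := h3 r i
    split_ifs <;> simp [this]
  · intro i hi
    rw [Finset.sum_range_succ, Finset.sum_range_succ]
    have : ∑ r ∈ Finset.range p, (if r < p then S r i else if r = p then -1 else 1) *
        (2 * (((if r < p then X r i else if r = p then p * m + 2 * i + 1
          else p * m + 2 * i + 2 : ℕ)) : ℤ) - 1) = (p : ℤ) - 2 := by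
      rw [← h4 i hi]
      apply Finset.sum_congr rfl
      intro r hr
      simp [Finset.mem_range.1 hr]
    rw [this]
    simp
    ring

lemma goodArr (k m : ℕ) : GoodArr (3 + 2 * k) m := by
  induction k with
  | zero => exact goodArr_base m
  | succ k ih => exact goodArr_step _ _ ih

lemma sum_range_two_mul (m : ℕ) (f : ℕ → ℤ) :
    ∑ c ∈ Finset.range (2 * m), f c = ∑ i ∈ Finset.range m, (f (2 * i) + f (2 * i + 1)) := by
  induction m with
  | zero => simp
  | succ m ih =>
    rw [show 2 * (m + 1) = 2 * m + 1 + 1 by ring, Finset.sum_range_succ, Finset.sum_range_succ,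
      Finset.sum_range_succ, ih]
    ring

/-- The required matrix. -/
lemma exists_matrix (p q : ℕ) (hp : 3 ≤ p) (hq : 3 ≤ q) (hpo : p % 2 = 1) (hqe : q % 2 = 0) :
    ∃ A : Fin p → Fin q → ℕ, (∀ r c, 1 ≤ A r c ∧ A r c ≤ p * q) ∧
      (∀ r c r' c', A r c = A r' c' → r = r' ∧ c = c') ∧
      ∃ R a b : ℕ, R ≠ a ∧ R ≠ b ∧ a ≠ b ∧ (∀ r, ∑ c, A r c = R) ∧
        (∀ c, ∑ r, A r c = a ∨ ∑ r, A r c = b) ∧ (∃ c, ∑ r, A r c = a) ∧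
        (∃ c, ∑ r, A r c = b) := by
  obtain ⟨m, rfl⟩ : ∃ m, q = 2 * m := ⟨q / 2, by omega⟩
  obtain ⟨k, hk⟩ : ∃ k, p = 3 + 2 * k := ⟨(p - 3) / 2, by omega⟩
  obtain ⟨X, S, h1, h2, h3, h4⟩ : GoodArr p m := hk ▸ goodArr k m
  have eN : p * (2 * m) = 2 * (p * m) := by ring
  let T : ℕ → ℕ → ℤ := fun r c => if c % 2 = 0 then S r (c / 2) else - S r (c / 2)
  let E : ℕ → ℕ → ℕ := fun r c => if T r c = 1 then p * m + X r (c / 2) else p * m + 1 - X r (c / 2)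
  have hT : ∀ r c, T r c = 1 ∨ T r c = -1 := by
    intro r c
    have := h3 r (c / 2)
    simp only [T]
    split_ifs <;> omega
  have hE2 : ∀ r c, r < p → c < 2 * m →
      2 * (E r c : ℤ) = (2 * (p * m : ℕ) + 1) + T r c * (2 * (X r (c / 2) : ℤ) - 1) := by
    intro r c hr hc
    have hb := h1 r (c / 2) hr (by omega)
    simp only [E]
    rcases hT r c with h | h
    · rw [if_pos h, h]; push_cast; ring
    · rw [if_neg (by rw [h]; decide), h]
      rw [Nat.cast_sub (by omega)]; push_cast; ring
  have hcol : ∀ c, c < 2 * m → 2 * ∑ r ∈ Finset.range p, (E r c : ℤ) =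
      p * (2 * (p * m : ℕ) + 1) + (if c % 2 = 0 then (p : ℤ) - 2 else - ((p : ℤ) - 2)) := by
    intro c hc
    rw [Finset.mul_sum, Finset.sum_congr rfl
      (fun r hr => hE2 r c (Finset.mem_range.1 hr) hc), Finset.sum_add_distrib]
    rw [← h4 (c / 2) (by omega)]
    simp only [Finset.sum_const, Finset.card_range, nsmul_eq_mul, T]
    split_ifs
    · rfl
    · simp [Finset.sum_neg_distrib]
  have hrow : ∀ r, r < p → ∑ c ∈ Finset.range (2 * m), (E r c : ℤ) =
      m * (2 * (p * m : ℕ) + 1) := by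
    intro r hr
    rw [sum_range_two_mul]
    rw [Finset.sum_congr rfl (g := fun _ => (2 * (p * m : ℕ) + 1 : ℤ))]
    · simp
    · intro i hi
      have hi := Finset.mem_range.1 hi
      have e1 := hE2 r (2 * i) hr (by omega)
      have e2 := hE2 r (2 * i + 1) hr (by omega)
      have t1 : T r (2 * i) = S r i := by simp [T]
      have d : (2 * i + 1) / 2 = i := by omega
      have t2 : T r (2 * i + 1) = - S r i := by
        simp [T, d, Nat.add_mod]
      rw [t1, show 2 * i / 2 = i by omega] at e1
      rw [t2, d] at e2
      linarith
  have hfc : ∀ c : Fin (2 * m), ((∑ r : Fin p, E r c : ℕ) : ℤ) = ∑ r ∈ Finset.range p, (E r c : ℤ) := by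
    intro c
    rw [Finset.sum_range]; push_cast; rfl
  have hfr : ∀ r : Fin p, ((∑ c : Fin (2 * m), E r c : ℕ) : ℤ) =
      ∑ c ∈ Finset.range (2 * m), (E r c : ℤ) := by
    intro r
    rw [Finset.sum_range]; push_cast; rfl
  refine ⟨fun r c => E r c, ?_, ?_, m * (2 * (p * m) + 1),
    ∑ r : Fin p, E r 0, ∑ r : Fin p, E r 1, ?_⟩
  · intro r c
    have hb := h1 r (c / 2) r.2 (by omega)
    simp only [E]
    rw [eN]
    split_ifs <;> omega
  · intro r c r' c' h
    have hb := h1 r (c / 2) r.2 (by omega)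
    have hb' := h1 r' (c' / 2) r'.2 (by omega)
    have key : T r c = T r' c' ∧ X r (c / 2) = X r' (c' / 2) := by
      have u := hT r c
      have u' := hT r' c'
      simp only [E] at h
      split_ifs at h <;> omega
    obtain ⟨k1, k2⟩ := key
    obtain ⟨e1, e2⟩ := h2 _ _ _ _ r.2 (by omega) r'.2 (by omega) k2
    have hs := h3 r (c / 2)
    simp only [T] at k1
    rw [← e1, ← e2] at k1
    refine ⟨Fin.ext e1, Fin.ext ?_⟩
    split_ifs at k1 <;> omega
  · have c0 := hcol 0 (by omega)
    have c1 := hcol 1 (by omega)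
    have f0 := hfc ⟨0, by omega⟩
    have f1 := hfc ⟨1, by omega⟩
    simp only at f0 f1
    rw [← f0] at c0
    rw [← f1] at c1
    rw [if_pos (by norm_num)] at c0
    rw [if_neg (by norm_num)] at c1
    have hall : ∀ c : Fin (2 * m), ∑ r : Fin p, E r c = ∑ r : Fin p, E r 0 ∨
        ∑ r : Fin p, E r c = ∑ r : Fin p, E r 1 := by
      intro c
      have cc := hcol c c.2
      rw [← hfc] at cc
      split_ifs at cc
      · left; zify; push_cast at *; linarith
      · right; zify; push_cast at *; linarith
    have hM : (p : ℤ) ≤ (p * m : ℕ) := by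
      have : p * 1 ≤ p * m := Nat.mul_le_mul_left p (by omega)
      exact_mod_cast (by omega)
    have hne : ∀ t : ℤ, -(p : ℤ) ≤ t → t ≤ p →
        2 * ((m * (2 * (p * m) + 1) : ℕ) : ℤ) ≠ p * (2 * (p * m : ℕ) + 1) + t := by
      intro t ht1 ht2 h
      push_cast at h hM
      have h' : (2 * (m : ℤ) - p) * (2 * (p * m) + 1) = t := by linarith
      have hd : 2 * (m : ℤ) - p ≠ 0 := by omega
      rcases lt_or_gt_of_ne hd with g | g
      · have : (2 * (m : ℤ) - p) ≤ -1 := by omega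
        nlinarith
      · have : 1 ≤ (2 * (m : ℤ) - p) := by omega
        nlinarith
    refine ⟨?_, ?_, ?_, ?_, hall, ⟨⟨0, by omega⟩, rfl⟩, ⟨⟨1, by omega⟩, rfl⟩⟩
    · intro h
      rw [← h] at c0
      exact hne _ (by omega) (by omega) c0
    · intro h
      rw [← h] at c1
      exact hne _ (by omega) (by omega) c1
    · intro h
      rw [h] at c0
      omega
    · intro r
      have := hrow r r.2
      rw [← hfr] at this
      exact_mod_cast this

/-- The edges of the complete bipartite graph. -/
def kEdge (p q : ℕ) (x : Fin p × Fin q) : Sym2 (Fin p ⊕ Fin q) := s(Sum.inl x.1, Sum.inr x.2)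

lemma kEdge_inj (p q : ℕ) : Function.Injective (kEdge p q) := by
  rintro ⟨a, b⟩ ⟨c, d⟩ h
  simpa [kEdge] using h

lemma edgeSet_eq (p q : ℕ) :
    (completeBipartiteGraph (Fin p) (Fin q)).edgeSet = Set.range (kEdge p q) := by
  ext e
  induction e using Sym2.ind with
  | _ x y =>
    rcases x with x | x <;> rcases y with y | y <;> simp [kEdge]

lemma ncard_edge (p q : ℕ) :
    (completeBipartiteGraph (Fin p) (Fin q)).edgeSet.ncard = p * q := by
  rw [edgeSet_eq, ← Set.image_univ, Set.ncard_image_of_injective _ (kEdge_inj p q)]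
  simp [Set.ncard_univ]

lemma vs_inl (p q : ℕ) (f : Sym2 (Fin p ⊕ Fin q) → ℕ) (r : Fin p) :
    vertexSum (completeBipartiteGraph (Fin p) (Fin q)) f (Sum.inl r) = ∑ c, f (kEdge p q (r, c)) := by
  have : (completeBipartiteGraph (Fin p) (Fin q)).incidenceSet (Sum.inl r) =
      Set.range (fun c => kEdge p q (r, c)) := by
    ext e
    rw [SimpleGraph.incidenceSet, Set.mem_setOf_eq, edgeSet_eq]
    constructor
    · rintro ⟨⟨⟨a, b⟩, rfl⟩, h⟩
      simp [kEdge] at h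
      exact ⟨b, by rw [h]⟩
    · rintro ⟨c, rfl⟩
      exact ⟨⟨_, rfl⟩, by simp [kEdge]⟩
  rw [vertexSum, this, finsum_mem_range, finsum_eq_sum_of_fintype]
  intro a b h
  have := kEdge_inj p q h
  simpa using this

lemma vs_inr (p q : ℕ) (f : Sym2 (Fin p ⊕ Fin q) → ℕ) (c : Fin q) :
    vertexSum (completeBipartiteGraph (Fin p) (Fin q)) f (Sum.inr c) = ∑ r, f (kEdge p q (r, c)) := by
  have : (completeBipartiteGraph (Fin p) (Fin q)).incidenceSet (Sum.inr c) =
      Set.range (fun r => kEdge p q (r, c)) := by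
    ext e
    rw [SimpleGraph.incidenceSet, Set.mem_setOf_eq, edgeSet_eq]
    constructor
    · rintro ⟨⟨⟨a, b⟩, rfl⟩, h⟩
      simp [kEdge] at h
      exact ⟨a, by rw [h]⟩
    · rintro ⟨c, rfl⟩
      exact ⟨⟨_, rfl⟩, by simp [kEdge]⟩
  rw [vertexSum, this, finsum_mem_range, finsum_eq_sum_of_fintype]
  intro a b h
  have := kEdge_inj p q h
  simpa using this

lemma exists_label (p q : ℕ) (A : Fin p → Fin q → ℕ) (h1 : ∀ r c, 1 ≤ A r c ∧ A r c ≤ p * q)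
    (h2 : ∀ r c r' c', A r c = A r' c' → r = r' ∧ c = c') :
    ∃ f : Sym2 (Fin p ⊕ Fin q) → ℕ,
      Set.BijOn f (completeBipartiteGraph (Fin p) (Fin q)).edgeSet
        (Set.Icc 1 (completeBipartiteGraph (Fin p) (Fin q)).edgeSet.ncard) ∧
      ∀ r c, f (kEdge p q (r, c)) = A r c := by
  let f := Function.extend (kEdge p q) (fun x => A x.1 x.2) 0
  have hf : ∀ x, f (kEdge p q x) = A x.1 x.2 := fun x => (kEdge_inj p q).extend_apply _ _ _
  refine ⟨f, ?_, fun r c => hf (r, c)⟩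
  have hm : Set.MapsTo f (completeBipartiteGraph (Fin p) (Fin q)).edgeSet
        (Set.Icc 1 (completeBipartiteGraph (Fin p) (Fin q)).edgeSet.ncard) := by
    rw [ncard_edge, edgeSet_eq]
    rintro _ ⟨x, rfl⟩
    rw [hf]
    exact h1 _ _
  have hi : Set.InjOn f (completeBipartiteGraph (Fin p) (Fin q)).edgeSet := by
    rw [edgeSet_eq]
    rintro _ ⟨x, rfl⟩ _ ⟨y, rfl⟩ h
    rw [hf, hf] at h
    obtain ⟨a, b⟩ := h2 _ _ _ _ h
    rw [Prod.ext a b]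
  refine ⟨hm, hi, ?_⟩
  have him : f '' (completeBipartiteGraph (Fin p) (Fin q)).edgeSet =
      Set.Icc 1 (completeBipartiteGraph (Fin p) (Fin q)).edgeSet.ncard := by
    apply Set.eq_of_subset_of_ncard_le hm.image_subset _ (Set.finite_Icc _ _)
    rw [Set.ncard_image_of_injOn hi, Set.ncard_eq_toFinset_card']
    simp
  exact him.ge

lemma sum_labels (p q : ℕ) (f : Sym2 (Fin p ⊕ Fin q) → ℕ)
    (hf : IsLocalAntimagic (completeBipartiteGraph (Fin p) (Fin q)) f) :
    2 * ∑ x, f (kEdge p q x) = p * q * (p * q + 1) := by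
  have hb := hf.1
  rw [ncard_edge, edgeSet_eq] at hb
  have inj : Function.Injective (fun x => f (kEdge p q x)) := by
    intro x y h
    exact kEdge_inj p q (hb.injOn ⟨x, rfl⟩ ⟨y, rfl⟩ h)
  have : Finset.univ.image (fun x => f (kEdge p q x)) = Finset.Icc 1 (p * q) := by
    apply Finset.coe_injective
    rw [Finset.coe_image, Finset.coe_univ, Set.image_univ, Finset.coe_Icc, ← hb.image_eq,
      ← Set.range_comp]
    rfl
  have e : ∑ x, f (kEdge p q x) = ∑ k ∈ Finset.Icc 1 (p * q), k := by
    rw [← this, Finset.sum_image (fun a _ b _ h => inj h)]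
  rw [e]
  have g : ∀ n : ℕ, 2 * ∑ k ∈ Finset.Icc 1 n, k = n * (n + 1) := by
    intro n
    induction n with
    | zero => simp
    | succ n ih => rw [Finset.sum_Icc_succ_top (by omega), mul_add, ih]; ring
  exact g _

lemma lower (p q : ℕ) (hp : 3 ≤ p) (hq : 3 ≤ q) (hpar : p % 2 ≠ q % 2)
    (f : Sym2 (Fin p ⊕ Fin q) → ℕ)
    (hf : IsLocalAntimagic (completeBipartiteGraph (Fin p) (Fin q)) f) :
    3 ≤ colorCount (completeBipartiteGraph (Fin p) (Fin q)) f := by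
  by_contra hlt
  have hs := sum_labels p q f hf
  set v := vertexSum (completeBipartiteGraph (Fin p) (Fin q)) f with hv
  have hfin : (Set.range v).Finite := Set.finite_range v
  have hne : ∀ r c, v (Sum.inl r) ≠ v (Sum.inr c) := fun r c => hf.2 _ _ (by simp)
  have hcard : ∀ x y z, v x ≠ v y → v x ≠ v z → v y ≠ v z → False := by
    intro x y z h1 h2 h3
    apply hlt
    have e : ({v x, v y, v z} : Set ℕ).ncard = 3 := Set.ncard_eq_three.2 ⟨_, _, _, h1, h2, h3, rfl⟩
    rw [colorCount, ← e]
    apply Set.ncard_le_ncard _ hfin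
    rintro _ (rfl | rfl | rfl) <;> exact ⟨_, rfl⟩
  let r0 : Fin p := ⟨0, by omega⟩
  let c0 : Fin q := ⟨0, by omega⟩
  have hr : ∀ r, v (Sum.inl r) = v (Sum.inl r0) := by
    intro r
    by_contra h
    exact hcard _ _ (Sum.inr c0) h (hne _ _) (hne _ _)
  have hc : ∀ c, v (Sum.inr c) = v (Sum.inr c0) := by
    intro c
    by_contra h
    exact hcard _ _ (Sum.inl r0) h (hne _ _).symm (hne _ _).symm
  have e1 : ∑ x, f (kEdge p q x) = p * v (Sum.inl r0) := by
    rw [Fintype.sum_prod_type]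
    rw [Finset.sum_congr rfl (fun r _ => ((vs_inl p q f r).symm.trans (hr r)))]
    simp
  have e2 : ∑ x, f (kEdge p q x) = q * v (Sum.inr c0) := by
    rw [Fintype.sum_prod_type_right]
    rw [Finset.sum_congr rfl (fun c _ => ((vs_inr p q f c).symm.trans (hc c)))]
    simp
  have k1 : 2 * v (Sum.inl r0) = q * (p * q + 1) := by
    apply Nat.eq_of_mul_eq_mul_left (show 0 < p by omega)
    rw [e1] at hs
    linarith
  have k2 : 2 * v (Sum.inr c0) = p * (p * q + 1) := by
    apply Nat.eq_of_mul_eq_mul_left (show 0 < q by omega)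
    rw [e2] at hs
    linarith
  have m1 : Even (q * (p * q + 1)) := ⟨_, by rw [← k1, two_mul]⟩
  have m2 : Even (p * (p * q + 1)) := ⟨_, by rw [← k2, two_mul]⟩
  rw [Nat.even_mul, Nat.even_add_one, Nat.even_mul, Nat.even_iff, Nat.even_iff] at m1 m2
  omega

lemma upper (p q : ℕ) (hp : 3 ≤ p) (hq : 3 ≤ q) (hpar : p % 2 ≠ q % 2) :
    ∃ f, IsLocalAntimagic (completeBipartiteGraph (Fin p) (Fin q)) f ∧
      colorCount (completeBipartiteGraph (Fin p) (Fin q)) f = 3 := by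
  rcases Nat.mod_two_eq_zero_or_one p with a | a
  · obtain ⟨A, h1, h2, R, a, b, ra, rb, ab, hR, hC, ⟨ca, hca⟩, ⟨cb, hcb⟩⟩ :=
      exists_matrix q p hq hp (by omega) a
    obtain ⟨f, hb, hf⟩ := exists_label p q (fun r c => A c r)
      (fun r c => by rw [mul_comm]; exact h1 c r) (fun r c r' c' h => (h2 _ _ _ _ h).symm)
    have vl : ∀ c, vertexSum (completeBipartiteGraph (Fin p) (Fin q)) f (Sum.inl c) =
        ∑ r, A r c := by intro c; rw [vs_inl]; simp [hf]
    have vr : ∀ r, vertexSum (completeBipartiteGraph (Fin p) (Fin q)) f (Sum.inr r) = R := by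
      intro r; rw [vs_inr]; simp [hf, hR]
    refine ⟨f, ⟨hb, ?_⟩, ?_⟩
    · rintro (u | u) (w | w) h
      · simp at h
      · rw [vl, vr]; rcases hC u with e | e <;> rw [e] <;> [exact ra.symm; exact rb.symm]
      · rw [vl, vr]; rcases hC w with e | e <;> rw [e] <;> [exact ra; exact rb]
      · simp at h
    · refine Set.ncard_eq_three.2 ⟨R, a, b, ra, rb, ab, ?_⟩
      ext y
      constructor
      · rintro ⟨u | u, rfl⟩
        · rw [vl]; rcases hC u with e | e <;> simp [e]
        · rw [vr]; simp
      · rintro (rfl | rfl | rfl)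
        · exact ⟨Sum.inr ⟨0, by omega⟩, vr _⟩
        · exact ⟨Sum.inl ca, by rw [vl, hca]⟩
        · exact ⟨Sum.inl cb, by rw [vl, hcb]⟩
  · obtain ⟨A, h1, h2, R, a, b, ra, rb, ab, hR, hC, ⟨ca, hca⟩, ⟨cb, hcb⟩⟩ :=
      exists_matrix p q hp hq a (by omega)
    obtain ⟨f, hb, hf⟩ := exists_label p q A h1 h2
    have vl : ∀ c, vertexSum (completeBipartiteGraph (Fin p) (Fin q)) f (Sum.inr c) =
        ∑ r, A r c := by intro c; rw [vs_inr]; simp [hf]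
    have vr : ∀ r, vertexSum (completeBipartiteGraph (Fin p) (Fin q)) f (Sum.inl r) = R := by
      intro r; rw [vs_inl]; simp [hf, hR]
    refine ⟨f, ⟨hb, ?_⟩, ?_⟩
    · rintro (w | w) (u | u) h
      · simp at h
      · rw [vl, vr]; rcases hC u with e | e <;> rw [e] <;> [exact ra; exact rb]
      · rw [vl, vr]; rcases hC w with e | e <;> rw [e] <;> [exact ra.symm; exact rb.symm]
      · simp at h
    · refine Set.ncard_eq_three.2 ⟨R, a, b, ra, rb, ab, ?_⟩
      ext y
      constructor
      · rintro ⟨u | u, rfl⟩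
        · rw [vr]; simp
        · rw [vl]; rcases hC u with e | e <;> simp [e]
      · rintro (rfl | rfl | rfl)
        · exact ⟨Sum.inl ⟨0, by omega⟩, vr _⟩
        · exact ⟨Sum.inr ca, by rw [vl, hca]⟩
        · exact ⟨Sum.inr cb, by rw [vl, hcb]⟩

theorem chiLA_Kpq_odd_even (p q : ℕ) (hp : 3 ≤ p) (hq : 3 ≤ q) (hpar : p % 2 ≠ q % 2) :
    chiLA (completeBipartiteGraph (Fin p) (Fin q)) = 3 := by
  have hu := upper p q hp hq hpar
  apply le_antisymm
  · exact Nat.sInf_le hu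
  · apply le_csInf ⟨3, hu⟩
    rintro n ⟨f, hf, rfl⟩
    exact lower p q hp hq hpar f hf
end
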